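/- arXiv:2312.09155 — 4 statements merged into one kernel-verified Lean document; each statement's English description precedes it below -/
import Mathlib

section
/- Let g ∈ SL_n(ℝ) be lower-triangular unipotent (g_{ii} = 1 for all i, and g_{ij} = 0 for i < j). Suppose v ∈ ⋀^k ℤ^n is a primitive integral vector such that ρ_k(g)·v lies in the line ℝ·(e_1∧e_2∧⋯∧e_k). Then v is a pure tensor: there exist f_1, …, f_k ∈ ℤ^n with v = f_1∧f_2∧⋯∧f_k. -/
/-!
If `g` is invertible and `ρ_k(g) v` is a multiple of a pure tensor, then so is
`v = ρ_k(g)⁻¹ (ρ_k(g) v)`. Thus `v` is integral and a pure tensor `b₁ ∧ ⋯ ∧ b_k` over `ℝ`, and it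
remains to make the `b_j` integral. Write the `b_j` as the columns of `B`, assume `v ≠ 0`, and let
`B_I` be a block of `k` rows with `d = det B_I ≠ 0`. By Cramer's rule the entries of
`A = B * adj B_I` are minors of `B`, that is coordinates of `v` up to sign or `0`, so `A` is
integral, and its columns have wedge `d ^ (k - 1) v`. Over a PID such an `A` factors as `C * P` with
`P` square and `C` a split injection. The maximal minors of `C` generate the unit ideal by
Cauchy–Binet, so `v` is an integral multiple of the wedge of the columns of `C`, and the factor can
be absorbed into one column.
-/

noncomputable section

/-- The index type for the basis `{e_{i₁} ∧ ⋯ ∧ e_{i_k} : i₁ < ⋯ < i_k}` of `⋀^k ℝ^n`: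
`k`-element subsets of `Fin n`. -/
abbrev WedgeIdx (n k : ℕ) := {s : Finset (Fin n) // s.card = k}

/-- The increasing enumeration of a `k`-element subset of `Fin n`. -/
def subsetEmb {n k : ℕ} (I : WedgeIdx n k) : Fin k → Fin n :=
  fun a => ((I.1.orderIsoOfFin I.2) a : Fin n)

/-- The matrix of the `k`-th exterior power `ρ_k(g)` of `g` in the wedge basis of `⋀^k ℝ^n`
(the `k`-th compound matrix, whose `(I, J)` entry is the `k × k` minor of `g` with rows `I`
and columns `J`): it is the unique matrix with
`ρ_k(g)(v₁ ∧ ⋯ ∧ v_k) = g v₁ ∧ ⋯ ∧ g v_k`. -/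
def compound (n k : ℕ) (g : Matrix (Fin n) (Fin n) ℝ) :
    Matrix (WedgeIdx n k) (WedgeIdx n k) ℝ :=
  fun I J => (Matrix.of fun a b : Fin k => g (subsetEmb I a) (subsetEmb J b)).det

/-- The coordinates, in the wedge basis of `⋀^k ℤ^n`, of the pure tensor
`f 0 ∧ f 1 ∧ ⋯ ∧ f (k-1)` of integer vectors. -/
def wedgeCoordsZ {n k : ℕ} (f : Fin k → Fin n → ℤ) : WedgeIdx n k → ℤ :=
  fun I => (Matrix.of fun a b : Fin k => f b (subsetEmb I a)).det

/-- The subset `{0, 1, …, k-1}` of `Fin n`, indexing the basis vector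
`e₁ ∧ e₂ ∧ ⋯ ∧ e_k` of `⋀^k ℝ^n`. -/
def idxLow (n k : ℕ) (hkn : k ≤ n) : WedgeIdx n k :=
  ⟨(Finset.range k).attachFin
      (fun m hm => lt_of_lt_of_le (Finset.mem_range.mp hm) hkn),
    by rw [Finset.card_attachFin, Finset.card_range]⟩

open Matrix Module

section PluckerCoords

variable {R S : Type*} [CommRing R] [CommRing S] {n k : ℕ}

/-- The Plücker coordinates of an `n × k` matrix `A`: its maximal minors, that is, the coordinates
in the wedge basis of `⋀^k R^n` of the wedge product of the columns of `A`. It extends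
`wedgeCoordsZ` to an arbitrary ring, with the vectors as columns. -/
def pluckerCoords (A : Matrix (Fin n) (Fin k) R) : WedgeIdx n k → R :=
  fun I => (A.submatrix (subsetEmb I) id).det

lemma wedgeCoordsZ_eq_pluckerCoords (f : Fin k → Fin n → ℤ) :
    wedgeCoordsZ f = pluckerCoords (of f)ᵀ :=
  rfl

variable (R n k) in
/-- The wedge basis `{e_{i₁} ∧ ⋯ ∧ e_{i_k} : i₁ < ⋯ < i_k}` of `⋀^k R^n`, with index set
`WedgeIdx n k` in place of the definitionally equal `Set.powersetCard (Fin n) k`. -/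
def wedgeBasis : Basis (WedgeIdx n k) R (⋀[R]^k (Fin n → R)) :=
  (Pi.basisFun R (Fin n)).exteriorPower k

lemma wedgeBasis_apply (I : WedgeIdx n k) :
    wedgeBasis R n k I =
      exteriorPower.ιMulti R k ((1 : Matrix (Fin n) (Fin n) R).submatrix id (subsetEmb I)).col := by
  have hcol : ((1 : Matrix (Fin n) (Fin n) R).submatrix id (subsetEmb I)).col =
      Pi.basisFun R (Fin n) ∘ subsetEmb I := by
    ext j i
    simp [one_apply, Pi.single_apply]
  rw [hcol]
  exact exteriorPower.basis_apply R k (Pi.basisFun R (Fin n)) I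

lemma wedgeBasis_repr_ιMulti_col (A : Matrix (Fin n) (Fin k) R) :
    (wedgeBasis R n k).repr (exteriorPower.ιMulti R k A.col) = pluckerCoords A := by
  ext I
  let e := Pi.basisFun R (Fin n)
  calc (wedgeBasis R n k).repr (exteriorPower.ιMulti R k A.col) I
      = exteriorPower.ιMultiDual R k e I (exteriorPower.ιMulti R k A.col) :=
        exteriorPower.basis_repr_apply R k e _ I
    _ = (A.submatrix (subsetEmb I) id)ᵀ.det :=
        exteriorPower.ιMultiDual_apply_ιMulti R k e I A.col
    _ = pluckerCoords A I := det_transpose _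

lemma pluckerCoords_one_submatrix (J : WedgeIdx n k) :
    pluckerCoords ((1 : Matrix (Fin n) (Fin n) R).submatrix id (subsetEmb J)) = Pi.single J 1 := by
  rw [← wedgeBasis_repr_ιMulti_col, ← wedgeBasis_apply, Basis.repr_self,
    Finsupp.single_eq_pi_single]

/-- The **Cauchy–Binet formula**: `B ↦ det (A * B)` is induced by a linear form on `⋀^k R^n`, whose
values on the wedge basis are the maximal minors of `A`. -/
lemma det_mul_eq_pluckerCoords_dotProduct (A : Matrix (Fin k) (Fin n) R)
    (B : Matrix (Fin n) (Fin k) R) : (A * B).det = pluckerCoords Aᵀ ⬝ᵥ pluckerCoords B := by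
  let F : ⋀[R]^k (Fin n → R) →ₗ[R] R :=
    exteriorPower.alternatingMapLinearEquiv (detRowAlternating.compLinearMap A.mulVecLin)
  have hF (C : Matrix (Fin n) (Fin k) R) : F (exteriorPower.ιMulti R k C.col) = (A * C).det := by
    rw [exteriorPower.alternatingMapLinearEquiv_apply_ιMulti, ← det_transpose]
    rfl
  have hbasis (I : WedgeIdx n k) : F (wedgeBasis R n k I) = pluckerCoords Aᵀ I := by
    rw [wedgeBasis_apply, hF, pluckerCoords, ← det_transpose]
    congr 1
    ext a b
    simp [mul_apply, one_apply]
  rw [← hF, ← (wedgeBasis R n k).sum_repr (exteriorPower.ιMulti R k B.col), map_sum,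
    wedgeBasis_repr_ιMulti_col]
  exact Finset.sum_congr rfl fun I _ => by rw [map_smul, hbasis, smul_eq_mul, mul_comm]

lemma pluckerCoords_mul (A : Matrix (Fin n) (Fin k) R) (P : Matrix (Fin k) (Fin k) R) :
    pluckerCoords (A * P) = P.det • pluckerCoords A :=
  funext fun I => (det_mul (A.submatrix (subsetEmb I) id) P).trans (mul_comm _ _)

lemma pluckerCoords_map (f : R →+* S) (A : Matrix (Fin n) (Fin k) R) :
    pluckerCoords (A.map f) = f ∘ pluckerCoords A :=
  funext fun I => (f.map_det (A.submatrix (subsetEmb I) id)).symm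

lemma exists_pluckerCoords_eq_smul (hk : 0 < k) (c : R) (A : Matrix (Fin n) (Fin k) R) :
    ∃ C : Matrix (Fin n) (Fin k) R, pluckerCoords C = c • pluckerCoords A := by
  let P : Matrix (Fin k) (Fin k) R := diagonal (Pi.mulSingle ⟨0, hk⟩ c)
  refine ⟨A * P, ?_⟩
  rw [pluckerCoords_mul, det_diagonal, Fintype.prod_pi_mulSingle']

lemma mul_adjugate_submatrix_apply (B : Matrix (Fin n) (Fin k) R) (φ : Fin k → Fin n)
    (i : Fin n) (j : Fin k) :
    (B * adjugate (B.submatrix φ id)) i j = (B.submatrix (Function.update φ j i) id).det := by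
  have hrow : (B.submatrix φ id).updateRow j (B i) = B.submatrix (Function.update φ j i) id := by
    ext a b
    by_cases h : a = j <;> simp [updateRow_apply, h]
  rw [← hrow, ← cramer_transpose_apply, cramer_eq_adjugate_mulVec, ← adjugate_transpose,
    mulVec_transpose]
  rfl

lemma pluckerCoords_mul_adjugate (B : Matrix (Fin n) (Fin k) R) (I : WedgeIdx n k) :
    pluckerCoords (B * adjugate (B.submatrix (subsetEmb I) id)) =
      pluckerCoords B I ^ (k - 1) • pluckerCoords B := by
  rw [pluckerCoords_mul, det_adjugate, Fintype.card_fin, pluckerCoords]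

lemma det_submatrix_mem_range (f : R →+* S) {B : Matrix (Fin n) (Fin k) S}
    (hB : ∀ I, pluckerCoords B I ∈ f.range) (φ : Fin k → Fin n) :
    (B.submatrix φ id).det ∈ f.range := by
  let E : Matrix (Fin k) (Fin n) R := (1 : Matrix (Fin n) (Fin n) R).submatrix φ id
  have hE : B.submatrix φ id = E.map f * B := by
    ext i j
    simp [E, mul_apply, one_apply]
  rw [hE, det_mul_eq_pluckerCoords_dotProduct, ← transpose_map, pluckerCoords_map]
  exact sum_mem fun I _ => mul_mem ⟨_, rfl⟩ (hB I)

lemma exists_pluckerCoords_eq_pow_smul {f : R →+* S} (hf : Function.Injective f)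
    {B : Matrix (Fin n) (Fin k) S} {m : WedgeIdx n k → R} (hB : pluckerCoords B = f ∘ m)
    (I : WedgeIdx n k) :
    ∃ A : Matrix (Fin n) (Fin k) R, pluckerCoords A = m I ^ (k - 1) • m := by
  choose A hA using fun i j => det_submatrix_mem_range f (fun J => ⟨m J, (congrFun hB J).symm⟩)
    (Function.update (subsetEmb I) j i)
  have hAB : (of A).map f = B * adjugate (B.submatrix (subsetEmb I) id) := by
    ext i j
    rw [mul_adjugate_submatrix_apply, ← hA, map_apply, of_apply]
  refine ⟨of A, hf.comp_left ?_⟩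
  change f ∘ _ = f ∘ _
  rw [← pluckerCoords_map, hAB, pluckerCoords_mul_adjugate, hB]
  ext J
  simp

lemma linearIndependent_col_of_pluckerCoords_ne_zero [IsDomain R] {A : Matrix (Fin n) (Fin k) R}
    {I : WedgeIdx n k} (hI : pluckerCoords A I ≠ 0) : LinearIndependent R A.col :=
  .of_comp (LinearMap.funLeft R R (subsetEmb I)) (linearIndependent_cols_of_det_ne_zero hI)

end PluckerCoords

section PrincipalIdealRing

variable {R S : Type*} [CommRing R] [IsDomain R] [IsPrincipalIdealRing R] [CommRing S] {n k : ℕ}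

lemma exists_mul_eq_one_and_eq_mul_of_linearIndependent_col {A : Matrix (Fin n) (Fin k) R}
    (hA : LinearIndependent R A.col) :
    ∃ (C : Matrix (Fin n) (Fin k) R) (D : Matrix (Fin k) (Fin n) R)
      (P : Matrix (Fin k) (Fin k) R), D * C = 1 ∧ A = C * P := by
  let e := Pi.basisFun R (Fin n)
  let N := Submodule.span R (Set.range A.col)
  obtain ⟨r, b, bN, f, a, hsnf⟩ := N.smithNormalForm e
  obtain rfl : r = k := by
    simpa using (finrank_eq_card_basis bN).symm.trans (finrank_eq_card_basis (Basis.span hA))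
  let v (j : Fin r) : N := ⟨A.col j, Submodule.subset_span ⟨j, rfl⟩⟩
  refine ⟨(e.toMatrix b).submatrix id f, (b.toMatrix e).submatrix f id,
    of fun i j => a i * bN.repr (v j) i, ?_, ?_⟩
  · rw [← submatrix_mul _ _ _ _ _ Function.bijective_id, Basis.toMatrix_mul_toMatrix_flip,
      submatrix_one _ f.injective]
  · ext l j
    have hv : A.col j = ∑ i, bN.repr (v j) i • a i • b (f i) := by
      simpa only [Submodule.coe_sum, Submodule.coe_smul, hsnf] using
        congrArg Subtype.val (bN.sum_repr (v j)).symm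
    refine (congrFun hv l).trans ?_
    simp [mul_apply, e, Basis.toMatrix_apply, mul_assoc, mul_left_comm, mul_comm]

lemma exists_eq_smul_pluckerCoords_of_pluckerCoords_eq_smul {A : Matrix (Fin n) (Fin k) R} {a : R}
    {m : WedgeIdx n k → R} (ha : a ≠ 0) (hm : m ≠ 0) (hA : pluckerCoords A = a • m) :
    ∃ (q : R) (C : Matrix (Fin n) (Fin k) R), m = q • pluckerCoords C := by
  obtain ⟨I, hI⟩ := Function.ne_iff.mp (hA ▸ smul_ne_zero ha hm)
  obtain ⟨C, D, P, hDC, rfl⟩ := exists_mul_eq_one_and_eq_mul_of_linearIndependent_col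
    (linearIndependent_col_of_pluckerCoords_ne_zero hI)
  rw [pluckerCoords_mul] at hA
  have hunimodular : pluckerCoords Dᵀ ⬝ᵥ pluckerCoords C = 1 := by
    rw [← det_mul_eq_pluckerCoords_dotProduct, hDC, det_one]
  have hP : P.det = a * (pluckerCoords Dᵀ ⬝ᵥ m) := by
    rw [← smul_eq_mul, ← dotProduct_smul, ← hA, dotProduct_smul, hunimodular, smul_eq_mul, mul_one]
  refine ⟨pluckerCoords Dᵀ ⬝ᵥ m, C, smul_right_injective _ ha ?_⟩
  change a • m = a • _
  rw [← hA, hP, mul_smul]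

theorem exists_eq_pluckerCoords_of_pluckerCoords_eq_map (hk : 0 < k) {f : R →+* S}
    (hf : Function.Injective f) {m : WedgeIdx n k → R} {B : Matrix (Fin n) (Fin k) S}
    (hB : pluckerCoords B = f ∘ m) : ∃ C : Matrix (Fin n) (Fin k) R, m = pluckerCoords C := by
  obtain rfl | hm := eq_or_ne m 0
  · obtain ⟨C, hC⟩ := exists_pluckerCoords_eq_smul hk (0 : R) (0 : Matrix (Fin n) (Fin k) R)
    exact ⟨C, by rw [hC, zero_smul]⟩
  obtain ⟨I, hI⟩ := Function.ne_iff.mp hm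
  obtain ⟨A, hA⟩ := exists_pluckerCoords_eq_pow_smul hf hB I
  obtain ⟨q, C, hC⟩ := exists_eq_smul_pluckerCoords_of_pluckerCoords_eq_smul
    (pow_ne_zero (k - 1) hI) hm hA
  obtain ⟨C', hC'⟩ := exists_pluckerCoords_eq_smul hk q C
  exact ⟨C', hC.trans hC'.symm⟩

end PrincipalIdealRing

section Compound

variable {n k : ℕ}

lemma compound_mulVec_pluckerCoords (g : Matrix (Fin n) (Fin n) ℝ) (B : Matrix (Fin n) (Fin k) ℝ) :
    compound n k g *ᵥ pluckerCoords B = pluckerCoords (g * B) := by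
  ext I
  refine Eq.trans ?_ (det_mul_eq_pluckerCoords_dotProduct (g.submatrix (subsetEmb I) id) B).symm
  exact congrArg (· ⬝ᵥ pluckerCoords B) (funext fun J => (det_transpose _).symm)

lemma compound_mul (g h : Matrix (Fin n) (Fin n) ℝ) :
    compound n k (g * h) = compound n k g * compound n k h := by
  ext I J
  exact congrFun (compound_mulVec_pluckerCoords g (h.submatrix id (subsetEmb J))).symm I

lemma compound_one : compound n k 1 = 1 := by
  ext I J
  rw [one_eq_pi_single, Pi.single_comm]
  exact congrFun (pluckerCoords_one_submatrix J) I

lemma eq_pluckerCoords_of_compound_mulVec_eq {g : Matrix (Fin n) (Fin n) ℝ} (hg : IsUnit g.det)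
    {v : WedgeIdx n k → ℝ} {B : Matrix (Fin n) (Fin k) ℝ}
    (hv : compound n k g *ᵥ v = pluckerCoords B) : v = pluckerCoords (g⁻¹ * B) := by
  rw [← compound_mulVec_pluckerCoords, ← hv, mulVec_mulVec, ← compound_mul, nonsing_inv_mul g hg,
    compound_one, one_mulVec]

end Compound

theorem pure_tensor_of_compound_mulVec_mem_line_general {n k : ℕ} (hk : 1 ≤ k)
    {g : Matrix (Fin n) (Fin n) ℝ} (hg : IsUnit g.det) (B : Matrix (Fin n) (Fin k) ℝ)
    {m : WedgeIdx n k → ℤ}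
    (hline : ∃ c : ℝ, compound n k g *ᵥ (fun I => (m I : ℝ)) = c • pluckerCoords B) :
    ∃ f : Fin k → Fin n → ℤ, m = wedgeCoordsZ f := by
  obtain ⟨c, hc⟩ := hline
  obtain ⟨B', hB'⟩ := exists_pluckerCoords_eq_smul hk c B
  have hm : (fun I => (m I : ℝ)) = pluckerCoords (g⁻¹ * B') :=
    eq_pluckerCoords_of_compound_mulVec_eq hg (hc.trans hB'.symm)
  obtain ⟨C, hC⟩ := exists_eq_pluckerCoords_of_pluckerCoords_eq_map hk
    (f := Int.castRingHom ℝ) Int.cast_injective hm.symm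
  exact ⟨Cᵀ, hC.trans (wedgeCoordsZ_eq_pluckerCoords Cᵀ).symm⟩

theorem pure_tensor_of_compound_mulVec_mem_line
    (n k : ℕ) (hn : 2 ≤ n) (hk : 1 ≤ k) (hkn : k ≤ n - 1)
    (g : Matrix (Fin n) (Fin n) ℝ) (hgdet : g.det = 1)
    (hgdiag : ∀ i, g i i = 1) (hgupper : ∀ i j : Fin n, i < j → g i j = 0)
    (m : WedgeIdx n k → ℤ)
    (hm0 : m ≠ 0)
    (hprim : ¬ ∃ a : ℤ, 2 ≤ a ∧ ∃ w : WedgeIdx n k → ℤ, m = fun I => a * w I)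
    (hline : ∃ c : ℝ, (compound n k g).mulVec (fun I => (m I : ℝ)) =
      fun I => if I = idxLow n k (by omega) then c else 0) :
    ∃ f : Fin k → Fin n → ℤ, m = wedgeCoordsZ f := by
  refine pure_tensor_of_compound_mulVec_mem_line_general hk (hgdet ▸ isUnit_one)
    ((1 : Matrix (Fin n) (Fin n) ℝ).submatrix id (subsetEmb (idxLow n k (by omega)))) ?_
  simpa [pluckerCoords_one_submatrix, funext_iff, Pi.single_apply] using hline

end
end

section
/- Let N ⊂ SL_n(ℝ) be the group of upper-triangular unipotent matrices, with Haar measure μ_N given by pushing forward Lebesgue measure on ℝ^{n(n−1)/2} under the coordinate parametrization u ↦ (u_{ij})_{i<j}. Let X := SL_n(ℝ)/SL_n(ℤ) and let μ be an SL_n(ℝ)-invariant Borel probability measure on X. Then for every point x ∈ X, every bounded open subset U ⊆ N with μ_N(U) > 0, and every bounded open subset W ⊆ X whose topological boundary satisfies μ(∂W) = 0, one has lim_{t→∞} (1/μ_N(U)) ∫_U 1_W(a_t u x) dμ_N(u) = μ(W), where 1_W denotes the characteristic function of W. -/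
open MeasureTheory Filter Topology

noncomputable section

/-- `SL_n(ℝ)`. -/
abbrev SL (n : ℕ) := Matrix.SpecialLinearGroup (Fin n) ℝ

/-- The subspace topology on `SL_n(ℝ)`, induced from the (entrywise) topology on the space of
`n × n` real matrices. -/
instance (n : ℕ) : TopologicalSpace (SL n) :=
  TopologicalSpace.induced (fun g => (g : Matrix (Fin n) (Fin n) ℝ)) inferInstance

/-- `SL_n(ℤ)`, viewed as a subgroup of `SL_n(ℝ)`. -/
def intSL (n : ℕ) : Subgroup (SL n) :=
  (Matrix.SpecialLinearGroup.map (n := Fin n) (Int.castRingHom ℝ)).range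

/-- The element `a_t = diag(e^{b₁ t}, …, e^{bₙ t})` of `SL_n(ℝ)` (using `∑ bᵢ = 0`). -/
def aSL {n : ℕ} (b : Fin n → ℝ) (hsum : ∑ i, b i = 0) (t : ℝ) : SL n :=
  ⟨Matrix.diagonal fun i => Real.exp (b i * t), by
    simp only [Matrix.det_diagonal]
    rw [← Real.exp_sum, ← Finset.sum_mul, hsum, zero_mul, Real.exp_zero]⟩

/-- Index type of the strictly-upper-triangular coordinates: pairs `(i, j)` with `i < j`.
There are `n(n-1)/2` of them. -/
abbrev TriIdx (n : ℕ) := {p : Fin n × Fin n // p.1 < p.2}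

/-- The upper-triangular unipotent matrix with strictly-upper entries given by `c`. -/
def uMat {n : ℕ} (c : TriIdx n → ℝ) : Matrix (Fin n) (Fin n) ℝ :=
  Matrix.of fun i j => if i = j then 1 else if h : i < j then c ⟨(i, j), h⟩ else 0

lemma uMat_det {n : ℕ} (c : TriIdx n → ℝ) : (uMat c).det = 1 := by
  have h : (uMat c).BlockTriangular id := by
    intro i j hij
    have h1 : ¬ i = j := fun h => absurd hij (by simp [h])
    have h2 : ¬ i < j := fun h => absurd (lt_trans h hij) (lt_irrefl _)
    simp [uMat, h1, h2]
  rw [Matrix.det_of_upperTriangular h]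
  simp [uMat]

/-- The upper-triangular unipotent matrix with strictly-upper entries `c`, as an element of
`SL_n(ℝ)`. The map `c ↦ uSL c` is the coordinate parametrization of the group `N` of
upper-triangular unipotent matrices, and the Haar measure `μ_N` is the pushforward of the
Lebesgue measure (`volume`) under it. -/
def uSL {n : ℕ} (c : TriIdx n → ℝ) : SL n := ⟨uMat c, uMat_det c⟩

/-!
The flow `aSL b hsum` is mixing on any homogeneous space of `SL n` with an invariant probability
measure. Indeed let `w` be a weak limit of translates of an `L²` function along an ultrafilter.
The flow, run backwards, contracts the transvections `1 + s E_{ij}` with `b j < b i`, so they fix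
`w`; by Mautner's phenomenon all of `SL n` then fixes `w`, which is hence constant. Mixing says
that the translates of every probability measure absolutely continuous with respect to `μ`
converge weakly to `μ`.

A piece of the orbit `N • x` is a null set, so it is thickened by lower triangular matrices close
to `1`: almost every element of `SL n` is a product of a lower triangular and an upper unipotent
matrix, so the thickened measure is absolutely continuous. As `b` is antitone, conjugation by the
flow does not expand lower triangular matrices in positive time, so for a compactly supported
continuous function the thickening changes the averages little, uniformly in time. Convergence
on such functions gives convergence on sets with null boundary.
-/

section HomogeneousSpace

open Measure

variable {G X : Type*} [Group G] [MeasurableSpace G] [MeasurableMul₂ G] [MeasurableInv G]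
  (η : Measure G) [SFinite η] [η.IsMulLeftInvariant]

section Action

variable [MulAction G X] [MulAction.IsPretransitive G X]

lemma ae_smul_of_ae_smul {p : X → Prop} {x : X} (hx : ∀ᵐ g ∂η, p (g • x)) (y : X) :
    ∀ᵐ g ∂η, p (g • y) := by
  obtain ⟨h, rfl⟩ := MulAction.exists_smul_eq G x y
  simpa only [smul_smul] using (quasiMeasurePreserving_mul_right η h).ae hx

variable [NeZero η] [MeasurableSpace X] [MeasurableSMul₂ G X] (μ : Measure X) [SFinite μ]
  [NeZero μ] [SMulInvariantMeasure G X μ]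

lemma ae_smul_iff_ae {p : X → Prop} (hp : MeasurableSet {y | p y}) (x : X) :
    (∀ᵐ g ∂η, p (g • x)) ↔ ∀ᵐ y ∂μ, p y := by
  have hswap : (∀ᵐ y ∂μ, ∀ᵐ g ∂η, p (g • y)) ↔ ∀ᵐ g ∂η, ∀ᵐ y ∂μ, p (g • y) :=
    ae_ae_comm (measurable_snd.smul measurable_fst hp)
  constructor <;> intro h
  · obtain ⟨g, hg⟩ := (hswap.mp (.of_forall (ae_smul_of_ae_smul η h))).exists
    simpa using (measurePreserving_smul g⁻¹ μ).quasiMeasurePreserving.ae hg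
  · obtain ⟨y, hy⟩ := (hswap.mpr (.of_forall fun g =>
      (measurePreserving_smul g μ).quasiMeasurePreserving.ae h)).exists
    exact ae_smul_of_ae_smul η hy x

lemma quasiMeasurePreserving_smul_const (x : X) :
    QuasiMeasurePreserving (fun g : G => g • x) η μ := by
  refine ⟨by fun_prop, AbsolutelyContinuous.mk fun E hE h0 => ?_⟩
  rw [map_apply (by fun_prop) hE, measure_eq_zero_iff_ae_notMem]
  exact (ae_smul_iff_ae η μ hE.compl x).mpr (measure_eq_zero_iff_ae_notMem.mp h0)

lemma ae_eq_const_of_ae_ae_smul_eq {Y : Type*} [MeasurableSpace Y] [MeasurableEq Y]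
    {f : X → Y} (hf : Measurable f) (hinv : ∀ᵐ g ∂η, ∀ᵐ y ∂μ, f (g • y) = f y) :
    ∃ c, f =ᵐ[μ] fun _ => c := by
  have hmeas : MeasurableSet {q : X × G | f (q.2 • q.1) = f q.1} :=
    measurableSet_eq_fun (by fun_prop) (by fun_prop)
  obtain ⟨y, hy⟩ := ((ae_ae_comm (μ := μ) (ν := η) hmeas).mpr hinv).exists
  exact ⟨f y, (ae_smul_iff_ae η μ (measurableSet_eq_fun hf measurable_const) y).mp hy⟩

end Action

/- A generic `g` can be moved to `1` by the two quasi-invariances, and for a generic `g` almost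
every product `q.1 * g * q.2` avoids a given null set. -/
lemma quasiMeasurePreserving_mul_of_frequently {α β : Measure G} [SFinite α] [SFinite β]
    (h : ∃ᵐ g ∂η, ∃ p n : G, p * g * n = 1 ∧
      QuasiMeasurePreserving (· * p) α α ∧ QuasiMeasurePreserving (n * ·) β β) :
    QuasiMeasurePreserving (fun q : G × G => q.1 * q.2) (α.prod β) η := by
  refine ⟨measurable_mul, AbsolutelyContinuous.mk fun E hE h0 => ?_⟩
  have hmeas : MeasurableSet {q : G × (G × G) | q.2.1 * q.1 * q.2.2 ∉ E} :=
    (show Measurable fun q : G × (G × G) => q.2.1 * q.1 * q.2.2 by fun_prop) hE.compl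
  have hshift (q : G × G) : ∀ᵐ g ∂η, q.1 * g * q.2 ∉ E :=
    ((quasiMeasurePreserving_mul_right η q.2).comp
      (measurePreserving_mul_left η q.1).quasiMeasurePreserving).ae
        (measure_eq_zero_iff_ae_notMem.mp h0)
  have hgen : ∀ᵐ g ∂η, ∀ᵐ q ∂α.prod β, q.1 * g * q.2 ∉ E :=
    (ae_ae_comm hmeas).mpr (.of_forall hshift)
  obtain ⟨g, ⟨p, n, hpgn, hp, hn⟩, hg⟩ := (h.and_eventually hgen).exists
  have hpull : ∀ᵐ q ∂α.prod β, q.1 * p * g * (n * q.2) ∉ E :=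
    (MeasureTheory.QuasiMeasurePreserving.prodMap hp hn).ae hg
  rw [map_apply measurable_mul hE, measure_eq_zero_iff_ae_notMem]
  filter_upwards [hpull] with q hq
  rwa [show q.1 * p * g * (n * q.2) = q.1 * (p * g * n) * q.2 by group, hpgn, mul_one] at hq

end HomogeneousSpace

section Transvection

open Matrix
open Matrix.SpecialLinearGroup (transvection diag2n)

variable {ι 𝕜 : Type*} [Fintype ι] [DecidableEq ι] [Field 𝕜] {i j k : ι}

lemma transvection_mul_transvection_mul_transvection (hij : i ≠ j) {l r : 𝕜} (hl : l ≠ 0)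
    (hr : r ≠ 0) :
    transvection hij ((l - 1) / r) * transvection hij.symm r *
      transvection hij ((l⁻¹ - 1) / r) = diag2n hij l hl * transvection hij.symm (l * r) := by
  ext p q
  simp only [Matrix.SpecialLinearGroup.coe_mul, SpecialLinearGroup.transvection_coe,
    SpecialLinearGroup.diag2n_coe, mul_add, mul_one, add_mul, one_mul, single_mul_single_same,
    single_mul_single_of_ne, ne_eq, hij.symm, not_false_eq_true, add_zero, Matrix.add_apply,
    one_apply, single_apply, diagonal_mul, mul_ite, mul_zero, ite_mul]
  split_ifs <;> grind

lemma diag2n_mul_transvection (hij : i ≠ j) {l : 𝕜} (hl : l ≠ 0) (r : 𝕜) :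
    diag2n hij l hl * transvection hij.symm r =
      transvection hij.symm (l⁻¹ ^ 2 * r) * diag2n hij l hl := by
  ext p q
  simp only [Matrix.SpecialLinearGroup.coe_mul, SpecialLinearGroup.transvection_coe,
    SpecialLinearGroup.diag2n_coe, diagonal_mul, mul_diagonal, Matrix.add_apply, one_apply,
    single_apply, mul_add, add_mul, mul_ite, ite_mul, mul_one, one_mul, mul_zero, zero_mul, inv_pow]
  split_ifs <;> grind

open scoped commutatorElement in
lemma commutator_transvection_transvection (hik : i ≠ k) (hkj : k ≠ j) (hij : i ≠ j) (s t : 𝕜) :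
    ⁅transvection hik s, transvection hkj t⁆ = transvection hij (s * t) := by
  ext p q
  simp only [commutatorElement_def, SpecialLinearGroup.transvection_inv,
    Matrix.SpecialLinearGroup.coe_mul, SpecialLinearGroup.transvection_coe, mul_add, mul_one,
    add_mul, one_mul, single_mul_single_same, single_mul_single_of_ne, ne_eq, hik.symm, hij.symm,
    hkj.symm, not_false_eq_true, add_zero, mul_neg, neg_mul, neg_neg, Matrix.add_apply, one_apply,
    single_apply]
  split_ifs <;> grind

end Transvection

section UnitaryRepresentation

variable {G H : Type*} [Group G] [NormedAddCommGroup H] [InnerProductSpace ℝ H]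
  (ρ : G →* (H ≃ₗᵢ[ℝ] H))

lemma rep_mul_apply (g h : G) (v : H) : ρ (g * h) v = ρ g (ρ h v) := by
  simp [map_mul]

lemma rep_inv_apply_apply (g : G) (v : H) : ρ g⁻¹ (ρ g v) = v := by
  simp [map_inv]

lemma inner_rep_apply_left (g : G) (v w : H) :
    inner ℝ (ρ g v) w = inner ℝ v (ρ g⁻¹ w) := by
  rw [← (ρ g⁻¹).inner_map_map, rep_inv_apply_apply]

/-- The subgroup of the `g` whose operator `ρ g` fixes the vector `w`. -/
def vectorStabilizer (w : H) : Subgroup G where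
  carrier := {g | ρ g w = w}
  one_mem' := by simp
  mul_mem' {g h} hg hh := (rep_mul_apply ρ g h w).trans ((congrArg (ρ g) hh).trans hg)
  inv_mem' {g} hg := (congrArg (ρ g⁻¹) hg).symm.trans (rep_inv_apply_apply ρ g w)

variable {ρ}

lemma mem_vectorStabilizer {g : G} {w : H} : g ∈ vectorStabilizer ρ w ↔ ρ g w = w := Iff.rfl

lemma mem_vectorStabilizer_of_inner_eq {g : G} {w : H}
    (h : inner ℝ (ρ g w) w = inner ℝ w w) : g ∈ vectorStabilizer ρ w := by
  have hzero : ‖ρ g w - w‖ ^ 2 = 0 := by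
    rw [norm_sub_sq_real, LinearIsometryEquiv.norm_map, h, real_inner_self_eq_norm_sq]
    ring
  exact sub_eq_zero.mp (norm_eq_zero.mp (pow_eq_zero_iff two_ne_zero |>.mp hzero))

lemma exists_tendsto_inner_rep [CompleteSpace H] {κ : Type*} (a : κ → G) (F : Ultrafilter κ)
    (v : H) : ∃ w : H, ∀ h, Tendsto (fun k => inner ℝ (ρ (a k) v) h) F (𝓝 (inner ℝ w h)) := by
  let functional : κ → WeakDual ℝ H := fun k =>
    StrongDual.toWeakDual (InnerProductSpace.toDual ℝ H (ρ (a k) v))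
  have hball (k) :
      functional k ∈ WeakDual.toStrongDual ⁻¹' Metric.closedBall (0 : StrongDual ℝ H) ‖v‖ := by
    simp [functional]
  obtain ⟨φ, -, hφ⟩ := (WeakDual.isCompact_closedBall (0 : StrongDual ℝ H) ‖v‖).ultrafilter_le_nhds
    (F.map functional) (le_principal_iff.mpr (Filter.mem_map.mpr (Filter.univ_mem' hball)))
  refine ⟨(InnerProductSpace.toDual ℝ H).symm (WeakDual.toStrongDual φ), fun h => ?_⟩
  have heval := ((WeakDual.eval_continuous (𝕜 := ℝ) h).tendsto φ).comp
    (show Tendsto functional F (𝓝 φ) from hφ)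
  simpa [functional, Function.comp_def] using heval

variable [TopologicalSpace G]

/- Matrix coefficients at `w` do not see `u` and `u'`, so `⟪ρ (u * e * u') w, w⟫ = ⟪ρ e w, w⟫`,
which tends to both `⟪ρ g w, w⟫` and `⟪w, w⟫`. -/
lemma mem_vectorStabilizer_of_tendsto (hρ : ∀ v, Continuous fun g => ρ g v) {κ : Type*}
    {l : Filter κ} [l.NeBot] {w : H} {g : G} {u e u' : κ → G}
    (hu : ∀ k, u k ∈ vectorStabilizer ρ w) (hu' : ∀ k, u' k ∈ vectorStabilizer ρ w)
    (he : Tendsto e l (𝓝 1)) (hg : Tendsto (fun k => u k * e k * u' k) l (𝓝 g)) :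
    g ∈ vectorStabilizer ρ w := by
  have hcoeff : Continuous fun g => inner ℝ (ρ g w) w := (hρ w).inner continuous_const
  refine mem_vectorStabilizer_of_inner_eq (tendsto_nhds_unique ((hcoeff.tendsto g).comp hg) ?_)
  have hlim := (hcoeff.tendsto 1).comp he
  rw [map_one] at hlim
  refine hlim.congr fun k => ?_
  have huk : ρ (u k)⁻¹ w = w := (vectorStabilizer ρ w).inv_mem (hu k)
  simp only [Function.comp_apply, rep_mul_apply, mem_vectorStabilizer.mp (hu' k)]
  rw [inner_rep_apply_left ρ (u k), huk]

lemma mem_vectorStabilizer_of_tendsto_conj (hρ : ∀ v, Continuous fun g => ρ g v) {κ : Type*}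
    {l : Filter κ} [l.NeBot] {a : κ → G} {v w : H}
    (hw : ∀ h, Tendsto (fun k => inner ℝ (ρ (a k) v) h) l (𝓝 (inner ℝ w h))) {u : G}
    (hu : Tendsto (fun k => (a k)⁻¹ * u * a k) l (𝓝 1)) : u ∈ vectorStabilizer ρ w := by
  refine mem_vectorStabilizer.mpr (ext_inner_right ℝ fun h => ?_)
  have hmoved : Tendsto (fun k => inner ℝ (ρ (u * a k) v) h) l (𝓝 (inner ℝ (ρ u w) h)) := by
    simpa only [rep_mul_apply, inner_rep_apply_left ρ u] using hw (ρ u⁻¹ h)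
  have hdiff : Tendsto (fun k => inner ℝ (ρ (u * a k) v - ρ (a k) v) h) l (𝓝 0) := by
    have hnorm : Tendsto (fun k => ‖ρ ((a k)⁻¹ * u * a k) v - v‖ * ‖h‖) l (𝓝 0) := by
      simpa using ((((hρ v).tendsto 1).comp hu).sub_const v).norm.mul_const ‖h‖
    refine squeeze_zero_norm (fun k => (norm_inner_le_norm _ _).trans_eq ?_) hnorm
    have hfactor : ρ (u * a k) v - ρ (a k) v = ρ (a k) (ρ ((a k)⁻¹ * u * a k) v - v) := by
      rw [map_sub, ← rep_mul_apply, mul_assoc, mul_inv_cancel_left]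
    rw [hfactor, LinearIsometryEquiv.norm_map]
  exact tendsto_nhds_unique hmoved (by simpa [inner_sub_left] using hdiff.add (hw h))

end UnitaryRepresentation

section Topology

variable {n : ℕ}

instance : IsTopologicalGroup (SL n) :=
  Matrix.SpecialLinearGroup.topologicalGroup (n := Fin n) (R := ℝ)

lemma isClosedEmbedding_coe_SL :
    IsClosedEmbedding (fun g : SL n => (g : Matrix (Fin n) (Fin n) ℝ)) :=
  (isClosed_eq (continuous_id.matrix_det) continuous_const).isClosedEmbedding_subtypeVal

instance : SecondCountableTopology (SL n) :=
  haveI : SecondCountableTopology (Matrix (Fin n) (Fin n) ℝ) :=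
    inferInstanceAs (SecondCountableTopology (Fin n → Fin n → ℝ))
  TopologicalSpace.secondCountableTopology_induced _ _ _

instance : LocallyCompactSpace (SL n) :=
  haveI : LocallyCompactSpace (Matrix (Fin n) (Fin n) ℝ) :=
    inferInstanceAs (LocallyCompactSpace (Fin n → Fin n → ℝ))
  isClosedEmbedding_coe_SL.locallyCompactSpace

instance : MeasurableSpace (SL n) := borel _

instance : BorelSpace (SL n) := ⟨rfl⟩

lemma continuous_SL_apply (i j : Fin n) : Continuous fun g : SL n => g i j :=
  isClosedEmbedding_coe_SL.continuous.matrix_elem i j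

lemma continuous_SL_of_apply {α : Type*} [TopologicalSpace α] {f : α → SL n}
    (hf : ∀ i j, Continuous fun x => f x i j) : Continuous f :=
  continuous_induced_rng.mpr (continuous_matrix hf)

lemma hasBasis_nhds_one_SL : (𝓝 (1 : SL n)).HasBasis (fun ε : ℝ => 0 < ε)
    fun ε => {g | ∀ i j, |g i j - (1 : Matrix (Fin n) (Fin n) ℝ) i j| < ε} := by
  rw [nhds_induced]
  refine (Metric.nhds_basis_ball (x := fun i j : Fin n => (1 : Matrix (Fin n) (Fin n) ℝ) i j)).comap
    (fun (g : SL n) i j => g i j) |>.congr (fun _ => Iff.rfl) fun ε hε => ?_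
  ext g
  simp [dist_pi_lt_iff hε, Real.dist_eq]

lemma intSL_eq_iInter : (intSL n : Set (SL n)) =
    ⋂ i, ⋂ j, (fun g : SL n => g i j) ⁻¹' Set.range ((↑) : ℤ → ℝ) := by
  ext g
  simp only [Set.mem_iInter, Set.mem_preimage, Set.mem_range, SetLike.mem_coe]
  refine ⟨fun ⟨A, hA⟩ i j => ⟨A i j, hA ▸ rfl⟩, fun hg => ?_⟩
  choose A hA using hg
  have hmap : (Int.castRingHom ℝ).mapMatrix (Matrix.of A) = (g : Matrix _ _ ℝ) := Matrix.ext hA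
  have hdet : (Matrix.of A).det = 1 := by
    have hcast := (Int.castRingHom ℝ).map_det (Matrix.of A)
    rw [hmap, g.2, eq_intCast] at hcast
    exact_mod_cast hcast
  exact ⟨⟨Matrix.of A, hdet⟩, Subtype.ext hmap⟩

lemma isClosed_intSL : IsClosed (intSL n : Set (SL n)) := by
  rw [intSL_eq_iInter]
  exact isClosed_iInter fun i => isClosed_iInter fun j =>
    Int.isClosedEmbedding_coe_real.isClosed_range.preimage (continuous_SL_apply i j)

instance : T2Space (SL n ⧸ intSL n) := by
  rw [t2Space_iff_of_isOpenQuotientMap QuotientGroup.isOpenQuotientMap_mk]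
  have hfiber : {q : SL n × SL n | (q.1 : SL n ⧸ intSL n) = q.2} =
      (fun q : SL n × SL n => q.1⁻¹ * q.2) ⁻¹' (intSL n : Set (SL n)) := by
    ext q
    simp [QuotientGroup.eq]
  rw [hfiber]
  exact isClosed_intSL.preimage (by fun_prop)

lemma continuous_transvection {i j : Fin n} (hij : i ≠ j) :
    Continuous fun s : ℝ => (Matrix.SpecialLinearGroup.transvection hij s : SL n) := by
  refine continuous_SL_of_apply fun k l => ?_
  simp only [Matrix.SpecialLinearGroup.transvection_coe, Matrix.add_apply, Matrix.single_apply]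
  split_ifs <;> fun_prop

lemma continuous_uSL : Continuous (uSL (n := n)) := by
  refine continuous_SL_of_apply fun i j => ?_
  change Continuous fun c => uMat c i j
  simp only [uMat, Matrix.of_apply]
  split_ifs <;> fun_prop

end Topology

section DiagonalFlow

variable {n : ℕ} {b : Fin n → ℝ}

lemma coe_aSL (hsum : ∑ i, b i = 0) (t : ℝ) :
    (aSL b hsum t : Matrix (Fin n) (Fin n) ℝ) = Matrix.diagonal fun i => Real.exp (b i * t) :=
  rfl

lemma inv_aSL (hsum : ∑ i, b i = 0) (t : ℝ) : (aSL b hsum t)⁻¹ = aSL b hsum (-t) := by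
  rw [inv_eq_iff_mul_eq_one]
  ext i j
  rcases eq_or_ne i j with rfl | hij <;>
    simp [coe_aSL, ← Real.exp_add, *]

lemma aSL_conj_apply (hsum : ∑ i, b i = 0) (t : ℝ) (g : SL n) (i j : Fin n) :
    (aSL b hsum t * g * (aSL b hsum t)⁻¹ : SL n) i j = Real.exp ((b i - b j) * t) * g i j := by
  rw [inv_aSL, show (b i - b j) * t = b i * t + b j * -t by ring, Real.exp_add]
  simp only [coe_aSL, Matrix.SpecialLinearGroup.coe_mul, Matrix.mul_diagonal, Matrix.diagonal_mul]
  ring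

lemma inv_aSL_conj_transvection (hsum : ∑ i, b i = 0) {i j : Fin n} (hij : i ≠ j) (s t : ℝ) :
    (aSL b hsum t)⁻¹ * Matrix.SpecialLinearGroup.transvection hij s * aSL b hsum t =
      Matrix.SpecialLinearGroup.transvection hij (Real.exp ((b j - b i) * t) * s) := by
  have hconj := aSL_conj_apply hsum (-t) (Matrix.SpecialLinearGroup.transvection hij s)
  rw [← inv_aSL, inv_inv] at hconj
  ext k l
  rw [hconj]
  simp only [Matrix.SpecialLinearGroup.transvection_coe, Matrix.add_apply, Matrix.one_apply,
    Matrix.single_apply]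
  split_ifs <;> grind [Real.exp_zero]

lemma tendsto_inv_aSL_conj_transvection (hsum : ∑ i, b i = 0) {i j : Fin n} (hij : i ≠ j)
    (hlt : b j < b i) (s : ℝ) :
    Tendsto (fun t => (aSL b hsum t)⁻¹ * Matrix.SpecialLinearGroup.transvection hij s *
      aSL b hsum t) atTop (𝓝 1) := by
  have hexp : Tendsto (fun t : ℝ => Real.exp ((b j - b i) * t) * s) atTop (𝓝 0) := by
    simpa using (Real.tendsto_exp_atBot.comp
      (tendsto_id.const_mul_atTop_of_neg (sub_neg.mpr hlt))).mul_const s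
  simpa only [inv_aSL_conj_transvection, Function.comp_def,
    Matrix.SpecialLinearGroup.transvection_coeff_zero]
    using ((continuous_transvection hij).tendsto 0).comp hexp

lemma exists_ne_of_sum_eq_zero (hsum : ∑ i, b i = 0) (hb : b ≠ 0) (i : Fin n) :
    ∃ j, b j ≠ b i := by
  by_contra! hconst
  have : NeZero n := ⟨fun h => (h ▸ i).elim0⟩
  have hzero : n * b i = 0 := by simpa [hconst] using hsum
  exact hb (funext fun j => by simpa [hconst j, NeZero.ne n] using hzero)

end DiagonalFlow

section LowerTriangular

/-- The group of lower-triangular matrices of determinant `1`; for `b` decreasing it is not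
expanded by conjugation with `aSL b hsum t`, `t ≥ 0`, and it is complementary to the group
parametrized by `uSL`. -/
def lowerTriangularSL (n : ℕ) : Subgroup (SL n) where
  carrier := {g | (g : Matrix (Fin n) (Fin n) ℝ).BlockTriangular OrderDual.toDual}
  one_mem' := Matrix.blockTriangular_one
  mul_mem' := Matrix.BlockTriangular.mul
  inv_mem' {g} hg := by
    change Matrix.BlockTriangular ((g⁻¹ : SL n) : Matrix (Fin n) (Fin n) ℝ) _
    have : Invertible (g : Matrix (Fin n) (Fin n) ℝ) := Matrix.invertibleOfIsUnitDet _ (by simp)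
    have hinv := Matrix.blockTriangular_inv_of_blockTriangular hg
    rwa [Matrix.inv_def, g.2, Ring.inverse_one, one_smul, ← Matrix.SpecialLinearGroup.coe_inv]
      at hinv

variable {n : ℕ}

lemma mem_lowerTriangularSL {g : SL n} :
    g ∈ lowerTriangularSL n ↔ ∀ i j, i < j → g i j = 0 := Iff.rfl

lemma isClosed_lowerTriangularSL : IsClosed (lowerTriangularSL n : Set (SL n)) := by
  have hset : (lowerTriangularSL n : Set (SL n)) = {g | ∀ i j, i < j → g i j = 0} := rfl
  simp only [hset, Set.ofPred_forall]
  exact isClosed_iInter fun i => isClosed_iInter fun j => isClosed_iInter fun _ =>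
    isClosed_eq (continuous_SL_apply i j) continuous_const

variable {b : Fin n → ℝ}

lemma eventually_aSL_conj_mem (hmono : Antitone b) (hsum : ∑ i, b i = 0) {V : Set (SL n)}
    (hV : V ∈ 𝓝 1) : ∀ᶠ g in 𝓝 (1 : SL n), g ∈ lowerTriangularSL n →
      ∀ t, 0 ≤ t → aSL b hsum t * g * (aSL b hsum t)⁻¹ ∈ V := by
  obtain ⟨ε, hε, hεV⟩ := hasBasis_nhds_one_SL.mem_iff.mp hV
  filter_upwards [hasBasis_nhds_one_SL.mem_of_mem hε] with g hg hlow t ht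
  refine hεV fun i j => ?_
  rw [aSL_conj_apply]
  rcases lt_trichotomy i j with hij | rfl | hij
  · simpa [mem_lowerTriangularSL.mp hlow i j hij, Matrix.one_apply_ne hij.ne] using hε
  · simpa using hg i i
  · have hentry := hg i j
    rw [Matrix.one_apply_ne hij.ne', sub_zero] at hentry ⊢
    rw [abs_mul, Real.abs_exp]
    refine (mul_le_of_le_one_left (abs_nonneg _) (Real.exp_le_one_iff.mpr ?_)).trans_lt hentry
    exact mul_nonpos_of_nonpos_of_nonneg (sub_nonpos.mpr (hmono hij.le)) ht

end LowerTriangular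

section Mautner

open Matrix.SpecialLinearGroup (transvection diag2n)

variable {n : ℕ} {H : Type*} [NormedAddCommGroup H] [InnerProductSpace ℝ H]
  {ρ : SL n →* (H ≃ₗᵢ[ℝ] H)} {w : H}

lemma diag2n_mem_vectorStabilizer (hρ : ∀ v, Continuous fun g => ρ g v) {i j : Fin n}
    {hij : i ≠ j} (hw : ∀ s : ℝ, transvection hij s ∈ vectorStabilizer ρ w) {l : ℝ} (hl : l ≠ 0) :
    diag2n hij l hl ∈ vectorStabilizer ρ w := by
  have hlower := (continuous_transvection hij.symm).tendsto 0
  have hprod := (((continuous_transvection hij.symm).comp (continuous_const_mul l)).const_mul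
    (diag2n hij l hl : SL n)).tendsto 0
  simp only [Function.comp_apply, mul_zero, Matrix.SpecialLinearGroup.transvection_coeff_zero,
    mul_one] at hlower hprod
  refine mem_vectorStabilizer_of_tendsto hρ (l := 𝓝[≠] (0 : ℝ))
    (fun r => hw ((l - 1) / r)) (fun r => hw ((l⁻¹ - 1) / r))
    (hlower.mono_left nhdsWithin_le_nhds)
    ((hprod.mono_left nhdsWithin_le_nhds).congr' ?_)
  filter_upwards [self_mem_nhdsWithin] with r hr
  exact (transvection_mul_transvection_mul_transvection hij hl hr).symm

lemma transvection_symm_mem_vectorStabilizer (hρ : ∀ v, Continuous fun g => ρ g v) {i j : Fin n}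
    {hij : i ≠ j} (hw : ∀ s : ℝ, transvection hij s ∈ vectorStabilizer ρ w) (s : ℝ) :
    transvection hij.symm s ∈ vectorStabilizer ρ w := by
  have hdiag (k : ℝ) := diag2n_mem_vectorStabilizer hρ hw (Real.exp_ne_zero k)
  have hscale : Tendsto (fun k => (Real.exp k)⁻¹ ^ 2 * s) atTop (𝓝 0) := by
    simpa using ((tendsto_inv_atTop_zero.comp Real.tendsto_exp_atTop).pow 2).mul_const s
  have hlower := ((continuous_transvection hij.symm).tendsto 0).comp hscale
  rw [Matrix.SpecialLinearGroup.transvection_coeff_zero] at hlower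
  refine mem_vectorStabilizer_of_tendsto hρ (fun k => inv_mem (hdiag k)) hdiag hlower
    (tendsto_const_nhds.congr fun k => ?_)
  rw [Function.comp_apply, mul_assoc, ← diag2n_mul_transvection, inv_mul_cancel_left]

lemma transvection_mem_vectorStabilizer (hρ : ∀ v, Continuous fun g => ρ g v)
    {b : Fin n → ℝ} (hb : ∀ i, ∃ j, b j ≠ b i)
    (hw : ∀ i j (hij : i ≠ j), b j < b i → ∀ s, transvection hij s ∈ vectorStabilizer ρ w)
    (i j : Fin n) (hij : i ≠ j) (s : ℝ) : transvection hij s ∈ vectorStabilizer ρ w := by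
  have hne (i j) (hij : i ≠ j) (hbij : b i ≠ b j) (s : ℝ) :
      transvection hij s ∈ vectorStabilizer ρ w := by
    rcases hbij.lt_or_gt with hlt | hgt
    · exact transvection_symm_mem_vectorStabilizer hρ (hw j i hij.symm hlt) s
    · exact hw i j hij hgt s
  rcases ne_or_eq (b i) (b j) with hbij | hbij
  · exact hne i j hij hbij s
  obtain ⟨k, hk⟩ := hb i
  have hik : i ≠ k := by grind
  have hkj : k ≠ j := by grind
  rw [← mul_one s, ← commutator_transvection_transvection hik hkj hij, commutatorElement_def]
  have hleft := hne i k hik hk.symm s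
  have hright := hne k j hkj (hbij ▸ hk) 1
  exact mul_mem (mul_mem (mul_mem hleft hright) (inv_mem hleft)) (inv_mem hright)

lemma vectorStabilizer_eq_top_of_transvection_mem (hρ : ∀ v, Continuous fun g => ρ g v)
    {b : Fin n → ℝ} (hb : ∀ i, ∃ j, b j ≠ b i)
    (hw : ∀ i j (hij : i ≠ j), b j < b i → ∀ s, transvection hij s ∈ vectorStabilizer ρ w) :
    vectorStabilizer ρ w = ⊤ := by
  have hall := transvection_mem_vectorStabilizer hρ hb hw
  refine eq_top_iff.mpr fun g _ => ?_
  rcases subsingleton_or_nontrivial (Fin n) with hsub | hnontriv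
  · exact Subsingleton.elim 1 g ▸ one_mem _
  exact Matrix.SpecialLinearGroup.diagonal_transvection_induction' (· ∈ vectorStabilizer ρ w) g
    (fun _ _ hij _ hl => diag2n_mem_vectorStabilizer hρ (hall _ _ hij) hl)
    (fun _ _ hij s => hall _ _ hij s) (fun _ _ => mul_mem)

end Mautner

section Koopman

variable {G X : Type*} [Group G] [MulAction G X] [MeasurableSpace X] [MeasurableConstSMul G X]
  (μ : Measure X) [SMulInvariantMeasure G X μ]

variable (G) in
/-- The Koopman representation `f ↦ (y ↦ f (g⁻¹ • y))` of `G` on `L²(μ)`. -/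
def koopman : G →* (Lp ℝ 2 μ ≃ₗᵢ[ℝ] Lp ℝ 2 μ) where
  toFun g :=
    { toFun := fun f => DomMulAct.mk g⁻¹ • f
      invFun := fun f => DomMulAct.mk g • f
      map_add' := smul_add _
      map_smul' := smul_comm _
      left_inv := fun f => by simp [smul_smul]
      right_inv := fun f => by simp [smul_smul]
      norm_map' := DomMulAct.norm_smul_Lp _ }
  map_one' := by
    ext1 f
    change DomMulAct.mk (1 : G)⁻¹ • f = f
    rw [inv_one, DomMulAct.mk_one, one_smul]
  map_mul' g h := by
    ext1 f
    exact (congrArg (DomMulAct.mk · • f) (mul_inv_rev g h)).trans (mul_smul _ _ f)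

lemma koopman_apply (g : G) (f : Lp ℝ 2 μ) : koopman G μ g f = DomMulAct.mk g⁻¹ • f := rfl

lemma koopman_inv_ae_eq (g : G) (f : Lp ℝ 2 μ) : koopman G μ g⁻¹ f =ᵐ[μ] fun y => f (g • y) := by
  rw [koopman_apply, inv_inv]
  exact DomMulAct.smul_Lp_ae_eq _ _

lemma inner_koopman_toLp {f h : X → ℝ} (hf : MemLp f 2 μ) (hh : MemLp h 2 μ) (g : G) :
    inner ℝ (koopman G μ g (hf.toLp f)) (hh.toLp h) = ∫ y, f y * h (g • y) ∂μ := by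
  rw [inner_rep_apply_left, L2.inner_def]
  refine integral_congr_ae ?_
  filter_upwards [koopman_inv_ae_eq μ g (hh.toLp h), hf.coeFn_toLp,
    (measurePreserving_smul g μ).quasiMeasurePreserving.ae hh.coeFn_toLp] with y hrep hfy hhy
  rw [hrep, hfy, hhy]
  simp [mul_comm]

lemma continuous_koopman_apply [TopologicalSpace G] [IsTopologicalGroup G] [MeasurableSpace G]
    [OpensMeasurableSpace G] [TopologicalSpace X] [R1Space X] [BorelSpace X] [ContinuousSMul G X]
    [IsLocallyFiniteMeasure μ] [μ.InnerRegularCompactLTTop] (f : Lp ℝ 2 μ) :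
    Continuous fun g => koopman G μ g f := by
  have : Fact ((2 : ENNReal) ≠ ⊤) := ⟨ENNReal.ofNat_ne_top⟩
  exact (DomMulAct.continuous_mk.comp continuous_inv).smul continuous_const

lemma ae_eq_const_of_koopman_eq [MeasurableSpace G] [MeasurableMul₂ G] [MeasurableInv G]
    [MulAction.IsPretransitive G X] [MeasurableSMul₂ G X] [SFinite μ] [NeZero μ]
    (η : Measure G) [SFinite η] [NeZero η] [η.IsMulLeftInvariant] {w : Lp ℝ 2 μ}
    (hw : vectorStabilizer (koopman G μ) w = ⊤) : ∃ c, w =ᵐ[μ] fun _ => c := by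
  obtain ⟨w', hw', hww'⟩ := (Lp.aestronglyMeasurable w).aemeasurable
  have hinv (g : G) : ∀ᵐ y ∂μ, w' (g • y) = w' y := by
    have hfix : koopman G μ g⁻¹ w = w := mem_vectorStabilizer.mp (hw ▸ Subgroup.mem_top _)
    filter_upwards [hfix ▸ koopman_inv_ae_eq μ g w, hww',
      (measurePreserving_smul g μ).quasiMeasurePreserving.ae hww'] with y hy hyw hgyw
    rw [← hgyw, ← hy, hyw]
  obtain ⟨c, hc⟩ := ae_eq_const_of_ae_ae_smul_eq η μ hw' (.of_forall hinv)
  exact ⟨c, hww'.trans hc⟩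

variable [IsProbabilityMeasure μ]

lemma inner_const_one_eq_integral (v : Lp ℝ 2 μ) :
    inner ℝ v (Lp.const 2 μ (1 : ℝ)) = ∫ y, v y ∂μ := by
  rw [L2.inner_def]
  exact integral_congr_ae (.of_forall fun y => by simp)

/- `w` is constant, and pairing with the invariant function `1` computes its value. -/
lemma inner_eq_integral_mul_integral_of_tendsto {κ : Type*} {l : Filter κ} [l.NeBot] {a : κ → G}
    {f w : Lp ℝ 2 μ}
    (hw : ∀ h, Tendsto (fun k => inner ℝ (koopman G μ (a k) f) h) l (𝓝 (inner ℝ w h)))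
    (hconst : ∃ c, w =ᵐ[μ] fun _ => c) (h : Lp ℝ 2 μ) :
    inner ℝ w h = (∫ y, f y ∂μ) * ∫ y, h y ∂μ := by
  obtain ⟨c, hc⟩ := hconst
  have hmean (k) : inner ℝ (koopman G μ (a k) f) (Lp.const 2 μ (1 : ℝ)) = ∫ y, f y ∂μ := by
    rw [inner_rep_apply_left, koopman_apply, DomMulAct.smul_Lp_const, inner_const_one_eq_integral]
  have hcf : ∫ y, f y ∂μ = c := by
    have hlim := tendsto_nhds_unique (tendsto_const_nhds.congr fun k => (hmean k).symm)
      (hw (Lp.const 2 μ (1 : ℝ)))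
    simpa [inner_const_one_eq_integral, integral_congr_ae hc] using hlim
  rw [L2.inner_def, hcf, ← integral_const_mul]
  refine integral_congr_ae (hc.mono fun y hy => ?_)
  simp [hy, mul_comm]

end Koopman

section Approximation

lemma tendsto_of_forall_dist_le {κ E : Type*} [PseudoMetricSpace E] {l : Filter κ} {F : κ → E}
    {L : E} {C : ℝ} (h : ∀ δ > 0, ∃ F' L', Tendsto F' l (𝓝 L') ∧ dist L' L ≤ C * δ ∧
      ∀ᶠ k in l, dist (F k) (F' k) ≤ C * δ) : Tendsto F l (𝓝 L) := by
  refine Metric.tendsto_nhds.mpr fun ε hε => ?_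
  obtain ⟨δ, hδ, hCδ⟩ := exists_pos_mul_lt (show 0 < ε / 3 by positivity) C
  obtain ⟨F', L', hF', hL', hdist⟩ := h δ hδ
  filter_upwards [hdist, Metric.tendsto_nhds.mp hF' (ε / 3) (by positivity)] with k hk hk'
  linarith [dist_triangle4 (F k) (F' k) L' L]

variable {X : Type*} [MeasurableSpace X] {μ : Measure X}

lemma dist_integral_mul_le {r q k : X → ℝ} {C δ : ℝ} (hr : Integrable r μ) (hq : Integrable q μ)
    (hk : AEStronglyMeasurable k μ) (hkC : ∀ y, ‖k y‖ ≤ C) (hC : 0 ≤ C)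
    (hrq : ∫ y, ‖r y - q y‖ ∂μ ≤ δ) :
    dist (∫ y, r y * k y ∂μ) (∫ y, q y * k y ∂μ) ≤ C * δ := by
  have hkC' : ∀ᵐ y ∂μ, ‖k y‖ ≤ C := .of_forall hkC
  rw [dist_eq_norm, ← integral_sub (hr.mul_bdd hk hkC') (hq.mul_bdd hk hkC')]
  calc ‖∫ y, r y * k y - q y * k y ∂μ‖ ≤ ∫ y, C * ‖r y - q y‖ ∂μ := by
        refine norm_integral_le_of_norm_le ((hr.sub hq).norm.const_mul C) (.of_forall fun y => ?_)
        rw [← sub_mul, norm_mul, mul_comm]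
        exact mul_le_mul_of_nonneg_right (hkC y) (norm_nonneg _)
    _ ≤ C * δ := by
        rw [integral_const_mul]
        exact mul_le_mul_of_nonneg_left hrq hC

lemma tendsto_integral_mul_of_bounded [TopologicalSpace X] [NormalSpace X] [BorelSpace X]
    [μ.WeaklyRegular] {κ : Type*} {l : Filter κ} {k : κ → X → ℝ} {C L : ℝ}
    (hk : ∀ t, AEStronglyMeasurable (k t) μ) (hkC : ∀ t y, ‖k t y‖ ≤ C) (hL : ‖L‖ ≤ C)
    (h : ∀ q : BoundedContinuousFunction X ℝ,
      Tendsto (fun t => ∫ y, q y * k t y ∂μ) l (𝓝 ((∫ y, q y ∂μ) * L)))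
    {r : X → ℝ} (hr : Integrable r μ) :
    Tendsto (fun t => ∫ y, r y * k t y ∂μ) l (𝓝 ((∫ y, r y ∂μ) * L)) := by
  have hC : 0 ≤ C := (norm_nonneg L).trans hL
  refine tendsto_of_forall_dist_le (C := C) fun δ hδ => ?_
  obtain ⟨q, hrq, hq⟩ := hr.exists_boundedContinuous_integral_sub_le hδ
  refine ⟨_, _, h q, ?_, .of_forall fun t => dist_integral_mul_le hr hq (hk t) (hkC t) hC hrq⟩
  simpa only [integral_mul_const, dist_comm] using
    dist_integral_mul_le hr hq aestronglyMeasurable_const (fun _ => hL) hC hrq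

end Approximation

section Mixing

variable {n : ℕ} {X : Type*} [TopologicalSpace X] [T2Space X] [LocallyCompactSpace X]
  [SecondCountableTopology X] [MeasurableSpace X] [BorelSpace X] [MulAction (SL n) X]
  [ContinuousSMul (SL n) X] [MulAction.IsPretransitive (SL n) X]
  (μ : Measure X) [IsProbabilityMeasure μ] [SMulInvariantMeasure (SL n) X μ]
  {b : Fin n → ℝ} (hsum : ∑ i, b i = 0)

lemma tendsto_inner_koopman (hb : b ≠ 0) (f h : Lp ℝ 2 μ) :
    Tendsto (fun t => inner ℝ (koopman (SL n) μ (aSL b hsum t) f) h) atTop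
      (𝓝 ((∫ y, f y ∂μ) * ∫ y, h y ∂μ)) := by
  rw [tendsto_iff_ultrafilter]
  intro F hF
  have hρ := continuous_koopman_apply (G := SL n) μ
  obtain ⟨w, hw⟩ := exists_tendsto_inner_rep (ρ := koopman (SL n) μ) (aSL b hsum) F f
  have hinv : vectorStabilizer (koopman (SL n) μ) w = ⊤ :=
    vectorStabilizer_eq_top_of_transvection_mem hρ (exists_ne_of_sum_eq_zero hsum hb)
      fun i j hij hlt s => mem_vectorStabilizer_of_tendsto_conj hρ hw
        ((tendsto_inv_aSL_conj_transvection hsum hij hlt s).mono_left hF)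
  rw [← inner_eq_integral_mul_integral_of_tendsto μ hw
    (ae_eq_const_of_koopman_eq μ Measure.haar hinv)]
  exact hw h

lemma tendsto_integral_aSL_smul_of_absolutelyContinuous (hb : b ≠ 0) {ν : Measure X}
    [IsProbabilityMeasure ν] (hν : ν ≪ μ) (h : BoundedContinuousFunction X ℝ) :
    Tendsto (fun t => ∫ y, h (aSL b hsum t • y) ∂ν) atTop (𝓝 (∫ y, h y ∂μ)) := by
  have hmem (q : BoundedContinuousFunction X ℝ) : MemLp q 2 μ :=
    .of_bound q.continuous.aestronglyMeasurable ‖q‖ (.of_forall q.norm_coe_le_norm)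
  have hmix (q : BoundedContinuousFunction X ℝ) :
      Tendsto (fun t => ∫ y, q y * h (aSL b hsum t • y) ∂μ) atTop
        (𝓝 ((∫ y, q y ∂μ) * ∫ y, h y ∂μ)) := by
    have hinner := tendsto_inner_koopman μ hsum hb ((hmem q).toLp q) ((hmem h).toLp h)
    simpa only [inner_koopman_toLp, integral_congr_ae (hmem _).coeFn_toLp] using hinner
  have hlim := tendsto_integral_mul_of_bounded
    (fun t => (h.continuous.comp (continuous_const_smul (aSL b hsum t))).aestronglyMeasurable)
    (fun t y => h.norm_coe_le_norm _) (h.norm_integral_le_norm μ) hmix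
    (Measure.integrable_toReal_rnDeriv (μ := ν))
  rw [Measure.integral_toReal_rnDeriv hν, probReal_univ, one_mul] at hlim
  exact hlim.congr fun t => integral_rnDeriv_smul hν

end Mixing

section Decomposition

variable {n : ℕ}

lemma uSL_apply_of_lt (c : TriIdx n → ℝ) {i j : Fin n} (hij : i < j) :
    uSL c i j = c ⟨(i, j), hij⟩ := by
  simp [uSL, uMat, hij, hij.ne]

lemma uSL_apply_self (c : TriIdx n → ℝ) (i : Fin n) : uSL c i i = 1 := by
  simp [uSL, uMat]

lemma uSL_apply_of_gt (c : TriIdx n → ℝ) {i j : Fin n} (hij : j < i) : uSL c i j = 0 := by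
  simp [uSL, uMat, hij.ne', hij.not_gt]

lemma uSL_injective : Function.Injective (uSL (n := n)) := fun c c' h => by
  ext p
  rw [← uSL_apply_of_lt c p.2, h, uSL_apply_of_lt c' p.2]

/-- The coordinates of the product `uSL c₀ * uSL c`. -/
def uSLMulCoord (c₀ c : TriIdx n → ℝ) : TriIdx n → ℝ :=
  fun p => (uSL c₀ * uSL c) p.1.1 p.1.2

lemma uSL_uSLMulCoord (c₀ c : TriIdx n → ℝ) : uSL (uSLMulCoord c₀ c) = uSL c₀ * uSL c := by
  ext i j
  rcases lt_trichotomy i j with hij | rfl | hij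
  · rw [uSL_apply_of_lt _ hij, uSLMulCoord]
  · rw [uSL_apply_self, Matrix.SpecialLinearGroup.coe_mul, Matrix.mul_apply,
      Finset.sum_eq_single_of_mem i (Finset.mem_univ i), uSL_apply_self, uSL_apply_self, one_mul]
    intro k _ hk
    rcases hk.lt_or_gt with hlt | hgt
    · rw [uSL_apply_of_gt _ hlt, zero_mul]
    · rw [uSL_apply_of_gt c hgt, mul_zero]
  · rw [uSL_apply_of_gt _ hij, Matrix.SpecialLinearGroup.coe_mul, Matrix.mul_apply]
    refine (Finset.sum_eq_zero fun k _ => ?_).symm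
    rcases lt_or_ge k i with hlt | hge
    · rw [uSL_apply_of_gt _ hlt, zero_mul]
    · rw [uSL_apply_of_gt c (hij.trans_le hge), mul_zero]

/-- The linear part of the affine map `uSLMulCoord c₀`. -/
def uSLMulCoordLinear (c₀ : TriIdx n → ℝ) : (TriIdx n → ℝ) →ₗ[ℝ] (TriIdx n → ℝ) where
  toFun c p := (uMat c₀ * (uMat c - 1)) p.1.1 p.1.2
  map_add' c c' := by
    have hadd : uMat (c + c') - 1 = (uMat c - 1) + (uMat c' - 1) := by
      ext i j
      simp only [uMat, Matrix.sub_apply, Matrix.add_apply, Matrix.of_apply, Matrix.one_apply]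
      split_ifs <;> simp
    ext p
    simp [hadd, mul_add]
  map_smul' r c := by
    have hsmul : uMat (r • c) - 1 = r • (uMat c - 1) := by
      ext i j
      simp only [uMat, Matrix.sub_apply, Matrix.smul_apply, Matrix.of_apply, Matrix.one_apply]
      split_ifs <;> simp
    ext p
    simp [hsmul]

lemma uSLMulCoord_eq_add (c₀ c : TriIdx n → ℝ) :
    uSLMulCoord c₀ c = uSLMulCoordLinear c₀ c + c₀ := by
  ext p
  have hc₀ : c₀ p = uMat c₀ p.1.1 p.1.2 := (uSL_apply_of_lt c₀ p.2).symm
  change (uMat c₀ * uMat c) p.1.1 p.1.2 = (uMat c₀ * (uMat c - 1)) p.1.1 p.1.2 + c₀ p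
  rw [hc₀, mul_sub, mul_one, Matrix.sub_apply, sub_add_cancel]

lemma quasiMeasurePreserving_uSLMulCoord (c₀ : TriIdx n → ℝ) :
    Measure.QuasiMeasurePreserving (uSLMulCoord c₀) volume volume := by
  have hinj : Function.Injective (uSLMulCoordLinear c₀) := fun c c' h => uSL_injective <| by
    have hcoord : uSLMulCoord c₀ c = uSLMulCoord c₀ c' := by simp only [uSLMulCoord_eq_add, h]
    rwa [← (mul_right_injective (uSL c₀)).eq_iff, ← uSL_uSLMulCoord, ← uSL_uSLMulCoord,
      uSL_injective.eq_iff]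
  have hdet : LinearMap.det (uSLMulCoordLinear c₀) ≠ 0 :=
    fun h => LinearMap.det_eq_zero_iff_ker_ne_bot.mp h (LinearMap.ker_eq_bot.mpr hinj)
  rw [funext (uSLMulCoord_eq_add c₀)]
  exact (measurePreserving_add_right volume c₀).quasiMeasurePreserving.comp
    (Measure.LinearMap.quasiMeasurePreserving volume _ hdet)

/-- The block of `g` formed by the rows and columns of index less than `j`. -/
def leadingBlock (g : SL n) (j : Fin n) : Matrix {k // k < j} {k // k < j} ℝ :=
  (g : Matrix (Fin n) (Fin n) ℝ).submatrix Subtype.val Subtype.val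

/- Column `j` of `g * uSL c` is column `j` of `g` plus a combination of the previous columns; its
entries above the diagonal are cleared by solving a linear system with matrix `leadingBlock g j`. -/
lemma exists_mul_uSL_mem_lowerTriangularSL {g : SL n} (hg : ∀ j, (leadingBlock g j).det ≠ 0) :
    ∃ c, g * uSL c ∈ lowerTriangularSL n := by
  let v (j : Fin n) : {k // k < j} → ℝ := (leadingBlock g j)⁻¹.mulVec fun k => -g k.1 j
  refine ⟨fun p => v p.1.2 ⟨p.1.1, p.2⟩, mem_lowerTriangularSL.mpr fun i j hij => ?_⟩
  have hsolve : ∑ k : {k // k < j}, g i k * v j k = -g i j := by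
    have hv : (leadingBlock g j).mulVec (v j) = fun k => -g k.1 j := by
      rw [Matrix.mulVec_mulVec, Matrix.mul_nonsing_inv _ (hg j).isUnit, Matrix.one_mulVec]
    exact congrFun hv ⟨i, hij⟩
  set u := uSL fun p => v p.1.2 ⟨p.1.1, p.2⟩
  have hlt : ∑ k : {k // k < j}, g i k * u k j = ∑ k : {k // k < j}, g i k * v j k :=
    Finset.sum_congr rfl fun k _ => by rw [uSL_apply_of_lt _ k.2]
  have hge : ∑ k : {k // ¬ k < j}, g i k * u k j = g i j := by
    rw [Finset.sum_eq_single_of_mem ⟨j, lt_irrefl j⟩ (Finset.mem_univ _), uSL_apply_self, mul_one]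
    intro k _ hk
    have hjk : j < k := (not_lt.mp k.2).lt_of_ne fun h => hk (Subtype.ext h.symm)
    rw [uSL_apply_of_gt _ hjk, mul_zero]
  rw [Matrix.SpecialLinearGroup.coe_mul, Matrix.mul_apply,
    ← Fintype.sum_subtype_add_sum_subtype (· < j), hlt, hge, hsolve, neg_add_cancel]

lemma eventually_exists_mul_uSL_mem_lowerTriangularSL :
    ∀ᶠ g in 𝓝 (1 : SL n), ∃ c, g * uSL c ∈ lowerTriangularSL n := by
  suffices h : ∀ᶠ g in 𝓝 (1 : SL n), ∀ j, (leadingBlock g j).det ≠ 0 from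
    h.mono fun g => exists_mul_uSL_mem_lowerTriangularSL
  refine eventually_all.mpr fun j => ContinuousAt.eventually_ne (Continuous.continuousAt ?_) ?_
  · exact (isClosedEmbedding_coe_SL.continuous.matrix_submatrix _ _).matrix_det
  · rw [leadingBlock, Matrix.SpecialLinearGroup.coe_one,
      Matrix.submatrix_one _ Subtype.val_injective, Matrix.det_one]
    exact one_ne_zero

end Decomposition

section ProductMeasure

open Measure

lemma quasiMeasurePreserving_map_of_semiconj {A B : Type*} [MeasurableSpace A]
    [MeasurableSpace B] {m : Measure A} {i : A → B} {T : A → A} {S : B → B} (hi : Measurable i)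
    (hS : Measurable S) (hT : QuasiMeasurePreserving T m m) (h : Function.Semiconj i T S) :
    QuasiMeasurePreserving S (m.map i) (m.map i) := by
  refine ⟨hS, ?_⟩
  rw [map_map hS hi, ← h.comp_eq, ← map_map hi hT.measurable]
  exact hT.absolutelyContinuous.map hi

variable {n : ℕ}

instance : SecondCountableTopology (lowerTriangularSL n) :=
  TopologicalSpace.Subtype.secondCountableTopology _

instance : LocallyCompactSpace (lowerTriangularSL n) :=
  isClosed_lowerTriangularSL.isClosedEmbedding_subtypeVal.locallyCompactSpace

/-- The Haar measure of `lowerTriangularSL n`, as a measure on `SL n`. -/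
def lowerHaar (n : ℕ) : Measure (SL n) :=
  (haar : Measure (lowerTriangularSL n)).map Subtype.val

instance : SFinite (lowerHaar n) :=
  inferInstanceAs (SFinite ((haar : Measure (lowerTriangularSL n)).map Subtype.val))

lemma quasiMeasurePreserving_mul_right_lowerHaar {p : SL n} (hp : p ∈ lowerTriangularSL n) :
    QuasiMeasurePreserving (· * p) (lowerHaar n) (lowerHaar n) :=
  quasiMeasurePreserving_map_of_semiconj (by fun_prop) (by fun_prop)
    (MeasureTheory.quasiMeasurePreserving_mul_right haar (⟨p, hp⟩ : lowerTriangularSL n))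
    fun _ => rfl

lemma quasiMeasurePreserving_uSL_mul (c : TriIdx n → ℝ) :
    QuasiMeasurePreserving (uSL c * ·) (volume.map uSL) (volume.map uSL) :=
  quasiMeasurePreserving_map_of_semiconj continuous_uSL.measurable (by fun_prop)
    (quasiMeasurePreserving_uSLMulCoord c) (uSL_uSLMulCoord c)

lemma quasiMeasurePreserving_mul_lowerHaar_uSL :
    QuasiMeasurePreserving (fun q : SL n × SL n => q.1 * q.2)
      ((lowerHaar n).prod (volume.map uSL)) haar := by
  refine quasiMeasurePreserving_mul_of_frequently haar ?_
  refine (frequently_ae_mem_iff.mpr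
    (measure_pos_of_mem_nhds haar eventually_exists_mul_uSL_mem_lowerTriangularSL).ne').mono
    fun g ⟨c, hc⟩ => ⟨(g * uSL c)⁻¹, uSL c, by group, ?_, quasiMeasurePreserving_uSL_mul c⟩
  exact quasiMeasurePreserving_mul_right_lowerHaar (inv_mem hc)

end ProductMeasure

section Thickening

open CompactlySupported

lemma eventually_forall_dist_smul_lt {G X : Type*} [Group G] [TopologicalSpace G]
    [IsTopologicalGroup G] [WeaklyLocallyCompactSpace G] [TopologicalSpace X] [MulAction G X]
    [ContinuousSMul G X] (f : C_c(X, ℝ)) {ε : ℝ} (hε : 0 < ε) :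
    ∀ᶠ g in 𝓝 (1 : G), ∀ y, dist (f (g • y)) (f y) < ε := by
  obtain ⟨C, hC, hC1⟩ := exists_compact_mem_nhds (1 : G)
  set K : Set X := (fun q : G × X => q.1⁻¹ • q.2) '' (C ×ˢ tsupport f)
  have hK : IsCompact K :=
    (hC.prod f.hasCompactSupport).image (continuous_fst.inv.smul continuous_snd)
  have hmem {g : G} {y : X} (hg : g ∈ C) (hy : f (g • y) ≠ 0) : y ∈ K :=
    ⟨(g, g • y), ⟨hg, subset_tsupport f hy⟩, inv_smul_smul g y⟩
  have hunif : ∀ᶠ g in 𝓝 (1 : G), ∀ y ∈ K, dist (f (g • y)) (f y) < ε := by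
    refine hK.eventually_forall_of_forall_eventually fun y _ => ?_
    have hcont : Continuous fun q : G × X => dist (f (q.1 • q.2)) (f q.2) := by fun_prop
    exact hcont.continuousAt.eventually_lt continuousAt_const (by simpa using hε)
  filter_upwards [hunif, hC1] with g hg hgC y
  by_cases hy : y ∈ K
  · exact hg y hy
  · have hfy : f y = 0 := by
      by_contra h
      exact hy (hmem (mem_of_mem_nhds hC1) (by rwa [one_smul]))
    rwa [hfy, not_not.mp (mt (hmem hgC) hy), dist_self]

lemma dist_integral_le_of_ae_dist_le {Ω : Type*} [MeasurableSpace Ω] {ν : Measure Ω}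
    [IsProbabilityMeasure ν] {φ ψ : Ω → ℝ} {δ : ℝ} (hφ : Integrable φ ν) (hψ : Integrable ψ ν)
    (h : ∀ᵐ z ∂ν, dist (φ z) (ψ z) ≤ δ) : dist (∫ z, φ z ∂ν) (∫ z, ψ z ∂ν) ≤ δ := by
  simp only [dist_eq_norm, ← integral_sub hφ hψ] at h ⊢
  simpa only [probReal_univ, mul_one] using norm_integral_le_of_norm_le_const h

lemma exists_isProbabilityMeasure_absolutelyContinuous {Y : Type*} [TopologicalSpace Y]
    [MeasurableSpace Y] [OpensMeasurableSpace Y] (ν : Measure Y) [ν.IsOpenPosMeasure]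
    [IsLocallyFiniteMeasure ν] {y : Y} {p : Y → Prop} (hp : ∀ᶠ z in 𝓝 y, p z) :
    ∃ η : Measure Y, IsProbabilityMeasure η ∧ η ≪ ν ∧ ∀ᵐ z ∂η, p z := by
  obtain ⟨s, hs, hνs⟩ := ν.finiteAt_nhds y
  obtain ⟨t, hts, ht, hyt⟩ := mem_nhds_iff.mp (inter_mem hp hs)
  have hνt : ν t ≠ ⊤ := measure_ne_top_of_subset (hts.trans Set.inter_subset_right) hνs.ne
  exact ⟨ProbabilityTheory.cond ν t, ProbabilityTheory.cond_isProbabilityMeasure_of_finite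
    (ht.measure_pos ν ⟨y, hyt⟩).ne' hνt, ProbabilityTheory.cond_absolutelyContinuous,
    ProbabilityTheory.ae_cond_of_forall_mem ht.measurableSet fun z hz => (hts hz).1⟩

lemma exists_isProbabilityMeasure_absolutelyContinuous_lowerHaar {n : ℕ} {p : SL n → Prop}
    (hp : ∀ᶠ g in 𝓝 (1 : SL n), g ∈ lowerTriangularSL n → p g) :
    ∃ η : Measure (SL n), IsProbabilityMeasure η ∧ η ≪ lowerHaar n ∧ ∀ᵐ g ∂η, p g := by
  have hp' : ∀ᶠ g : lowerTriangularSL n in 𝓝 1, p g :=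
    (continuousAt_subtype_val.eventually hp).mono fun g hg => hg g.2
  obtain ⟨η, _, hη, hpη⟩ := exists_isProbabilityMeasure_absolutelyContinuous Measure.haar hp'
  have hval := MeasurableEmbedding.subtype_coe (isClosed_lowerTriangularSL (n := n)).measurableSet
  exact ⟨η.map Subtype.val, Measure.isProbabilityMeasure_map hval.measurable.aemeasurable,
    hη.map hval.measurable, hval.ae_map_iff.mpr hpη⟩

variable {n : ℕ} {X : Type*} [TopologicalSpace X] [SecondCountableTopology X]
  [MeasurableSpace X] [BorelSpace X] [MulAction (SL n) X] [ContinuousSMul (SL n) X]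
  [MulAction.IsPretransitive (SL n) X] (μ : Measure X) [IsProbabilityMeasure μ]
  [SMulInvariantMeasure (SL n) X μ]

lemma quasiMeasurePreserving_mul_uSL_smul (x : X) :
    Measure.QuasiMeasurePreserving (fun q : SL n × (TriIdx n → ℝ) => (q.1 * uSL q.2) • x)
      ((lowerHaar n).prod volume) μ := by
  have huSL := (continuous_uSL (n := n)).measurable.quasiMeasurePreserving volume
  exact (quasiMeasurePreserving_smul_const Measure.haar μ x).comp
    (quasiMeasurePreserving_mul_lowerHaar_uSL.comp
      (QuasiMeasurePreserving.prodMap (.id _) huSL))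

variable [T2Space X] [LocallyCompactSpace X] {b : Fin n → ℝ}

/- Thickening the orbit of `x` by lower triangular elements near `1` gives a measure to which mixing
applies, and `aSL b hsum t` does not expand the lower triangular directions. -/
lemma tendsto_integral_aSL_mul_uSL_smul (hmono : Antitone b) (hsum : ∑ i, b i = 0) (hb : b ≠ 0)
    {ν : Measure (TriIdx n → ℝ)} [IsProbabilityMeasure ν] (hν : ν ≪ volume) (x : X)
    (f : C_c(X, ℝ)) :
    Tendsto (fun t => ∫ c, f ((aSL b hsum t * uSL c) • x) ∂ν) atTop (𝓝 (∫ y, f y ∂μ)) := by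
  refine tendsto_of_forall_dist_le (C := 1) fun δ hδ => ?_
  obtain ⟨η, _, hη, hconj⟩ := exists_isProbabilityMeasure_absolutelyContinuous_lowerHaar
    (eventually_aSL_conj_mem hmono hsum (eventually_forall_dist_smul_lt f hδ))
  have hΦ := (quasiMeasurePreserving_mul_uSL_smul μ x).mono_left (hη.prod hν)
  have : IsProbabilityMeasure ((η.prod ν).map fun q => (q.1 * uSL q.2) • x) :=
    Measure.isProbabilityMeasure_map hΦ.aemeasurable
  refine ⟨_, _, tendsto_integral_aSL_smul_of_absolutelyContinuous μ hsum hb hΦ.absolutelyContinuous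
    f, by simpa using hδ.le, ?_⟩
  filter_upwards [eventually_ge_atTop 0] with t ht
  have hf : Measurable f := f.continuous.measurable
  have hfst : ∫ q, f ((aSL b hsum t * uSL q.2) • x) ∂η.prod ν =
      ∫ c, f ((aSL b hsum t * uSL c) • x) ∂ν := by
    rw [integral_fun_snd fun c => f ((aSL b hsum t * uSL c) • x), probReal_univ, one_smul]
  rw [integral_map hΦ.aemeasurable (by fun_prop), ← hfst]
  have hint {Φ : SL n × (TriIdx n → ℝ) → X} (hΦ : Measurable Φ) :
      Integrable (fun q => f (Φ q)) (η.prod ν) :=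
    .of_bound (hf.comp hΦ).aestronglyMeasurable ‖f.toBoundedContinuousFunction‖
      (.of_forall fun q => f.toBoundedContinuousFunction.norm_coe_le_norm (Φ q))
  have huSL : Measurable (uSL (n := n)) := continuous_uSL.measurable
  rw [one_mul]
  refine dist_integral_le_of_ae_dist_le (hint (by fun_prop))
    (hint (hΦ.measurable.const_smul (aSL b hsum t))) ?_
  filter_upwards [Measure.quasiMeasurePreserving_fst.ae hconj] with q hq
  have hcomm : aSL b hsum t * (q.1 * uSL q.2) =
      aSL b hsum t * q.1 * (aSL b hsum t)⁻¹ * (aSL b hsum t * uSL q.2) := by group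
  rw [dist_comm, smul_smul, hcomm, mul_smul _ (aSL b hsum t * uSL q.2)]
  exact (hq t ht _).le

end Thickening

section Portmanteau

open CompactlySupported

variable {X κ : Type*} [TopologicalSpace X] [T2Space X] [LocallyCompactSpace X]
  [MeasurableSpace X] [BorelSpace X] {l : Filter κ} {ν : κ → Measure X} {μ : Measure X}

lemma measure_isOpen_le_liminf_of_tendsto_integral [∀ k, IsFiniteMeasureOnCompacts (ν k)]
    [μ.Regular]
    (h : ∀ f : C_c(X, ℝ), Tendsto (fun k => ∫ y, f y ∂ν k) l (𝓝 (∫ y, f y ∂μ))) {O : Set X}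
    (hO : IsOpen O) : μ O ≤ liminf (fun k => ν k O) l := by
  rcases l.eq_or_neBot with rfl | _
  · rw [liminf_bot]
    exact le_top
  rw [hO.measure_eq_iSup_isCompact μ]
  refine iSup₂_le fun K hKO => iSup_le fun hK => ?_
  obtain ⟨f, hf1, hf0, hfc, hf⟩ := exists_continuous_one_zero_of_isCompact hK hO.isClosed_compl
    (Set.disjoint_compl_right_iff_subset.mpr hKO)
  have hint (m : Measure X) [IsFiniteMeasureOnCompacts m] :
      ∫⁻ y, ENNReal.ofReal (f y) ∂m = ENNReal.ofReal (∫ y, f y ∂m) :=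
    (ofReal_integral_eq_lintegral_ofReal (f.continuous.integrable_of_hasCompactSupport hfc)
      (.of_forall fun y => (hf y).1)).symm
  calc μ K ≤ ∫⁻ y, ENNReal.ofReal (f y) ∂μ := by
        rw [← lintegral_indicator_one hK.measurableSet]
        refine lintegral_mono (Set.indicator_le fun y hy => ?_)
        simp [hf1 hy]
    _ = liminf (fun k => ∫⁻ y, ENNReal.ofReal (f y) ∂ν k) l := by
        simp only [hint]
        exact ((ENNReal.continuous_ofReal.tendsto _).comp (h ⟨f, hfc⟩)).liminf_eq.symm
    _ ≤ liminf (fun k => ν k O) l := by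
        refine liminf_le_liminf (.of_forall fun k => ?_)
        rw [← lintegral_indicator_one hO.measurableSet]
        refine lintegral_mono (Set.le_indicator (fun y _ => ?_) fun y hy => ?_)
        · exact ENNReal.ofReal_le_one.mpr (hf y).2
        · simp [hf0 hy]

end Portmanteau

lemma toReal_map_cond_apply {Ω X : Type*} [MeasurableSpace Ω] [MeasurableSpace X] (m : Measure Ω)
    (U : Set Ω) {φ : Ω → X} (hφ : Measurable φ) {W : Set X} (hW : MeasurableSet W) :
    ((ProbabilityTheory.cond m U).map φ W).toReal =
      (∫ c in U, W.indicator (fun _ => (1 : ℝ)) (φ c) ∂m) / (m U).toReal := by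
  have hint : ∫ c in U, W.indicator (fun _ => (1 : ℝ)) (φ c) ∂m = (m.restrict U).real (φ ⁻¹' W) :=
    integral_indicator_one (hφ hW)
  rw [hint, Measure.map_apply hφ hW, ProbabilityTheory.cond, Measure.smul_apply, smul_eq_mul,
    ENNReal.toReal_mul, ENNReal.toReal_inv, inv_mul_eq_div, measureReal_def]

theorem translates_equidistribute_in_SLn_mod_SLnZ_general {n : ℕ} {X : Type*} [TopologicalSpace X]
    [T2Space X] [LocallyCompactSpace X] [SecondCountableTopology X] [MeasurableSpace X]
    [BorelSpace X] [MulAction (SL n) X] [ContinuousSMul (SL n) X]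
    [MulAction.IsPretransitive (SL n) X] (μ : Measure X) [IsProbabilityMeasure μ]
    [SMulInvariantMeasure (SL n) X μ] {b : Fin n → ℝ} (hmono : Antitone b) (hsum : ∑ i, b i = 0)
    (hb : b ≠ 0) (x : X) {U : Set (TriIdx n → ℝ)} (hU0 : volume U ≠ 0) (hUfin : volume U ≠ ⊤)
    {W : Set X} (hW : MeasurableSet W) (hWbdry : μ (frontier W) = 0) :
    Tendsto (fun t => (∫ c in U, W.indicator (fun _ => (1 : ℝ)) ((aSL b hsum t * uSL c) • x)) /
      (volume U).toReal) atTop (𝓝 (μ W).toReal) := by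
  set ν := ProbabilityTheory.cond volume U
  have : IsProbabilityMeasure ν := ProbabilityTheory.cond_isProbabilityMeasure_of_finite hU0 hUfin
  have hφ (t : ℝ) : Measurable fun c : TriIdx n → ℝ => (aSL b hsum t * uSL c) • x :=
    ((continuous_const.mul continuous_uSL).smul continuous_const).measurable
  have (t : ℝ) : IsProbabilityMeasure (ν.map fun c => (aSL b hsum t * uSL c) • x) :=
    Measure.isProbabilityMeasure_map (hφ t).aemeasurable
  have hlim : Tendsto (fun t => ν.map (fun c => (aSL b hsum t * uSL c) • x) W) atTop (𝓝 (μ W)) := by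
    refine tendsto_measure_of_null_frontier
      (fun O => measure_isOpen_le_liminf_of_tendsto_integral fun f => ?_) hWbdry
    refine (tendsto_integral_aSL_mul_uSL_smul (ν := ν) μ hmono hsum hb
      ProbabilityTheory.cond_absolutelyContinuous x f).congr fun t => ?_
    exact (integral_map (hφ t).aemeasurable f.continuous.aestronglyMeasurable).symm
  exact ((ENNReal.tendsto_toReal (measure_ne_top μ W)).comp hlim).congr fun t =>
    toReal_map_cond_apply volume U (hφ t) hW

theorem translates_equidistribute_in_SLn_mod_SLnZ
    (n : ℕ) (hn : 2 ≤ n) (b : Fin n → ℝ)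
    (hmono : ∀ i j : Fin n, i ≤ j → b j ≤ b i)
    (hsum : ∑ i, b i = 0) (hb : b ≠ 0)
    [MeasurableSpace (SL n ⧸ intSL n)] [BorelSpace (SL n ⧸ intSL n)]
    (μ : Measure (SL n ⧸ intSL n)) [IsProbabilityMeasure μ]
    (hinv : ∀ g : SL n, Measure.map (fun x => g • x) μ = μ)
    (x : SL n ⧸ intSL n)
    (U : Set (TriIdx n → ℝ)) (hUopen : IsOpen U) (hUbdd : Bornology.IsBounded U)
    (hUvol : 0 < volume U)
    (W : Set (SL n ⧸ intSL n)) (hWopen : IsOpen W) (hWbdd : IsCompact (closure W))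
    (hWbdry : μ (frontier W) = 0) :
    Tendsto
      (fun t : ℝ =>
        (∫ c in U, Set.indicator W (fun _ => (1 : ℝ)) ((aSL b hsum t * uSL c) • x)) /
          (volume U).toReal)
      atTop (𝓝 (μ W).toReal) := by
  have : SMulInvariantMeasure (SL n) (SL n ⧸ intSL n) μ :=
    ⟨fun g s hs => by rw [← Measure.map_apply (measurable_const_smul g) hs, hinv]⟩
  exact translates_equidistribute_in_SLn_mod_SLnZ_general μ (fun i j => hmono i j) hsum hb x
    hUvol.ne' hUbdd.measure_lt_top.ne hWopen.measurableSet hWbdry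

end
end

section
/- Let n = 3 and suppose b_1 > b_2 > b_3 (a regular one-parameter diagonal subgroup). Let τ > 0 and g ∈ SL_3(ℝ). Then the following are equivalent: (i) for every C > 0 there exists t > 0 such that δ(Ad(a_t g) sl_3(ℤ)) < C·e^{−τt}; (ii) for every C > 0 there exist t > 0 and γ ∈ SL_3(ℤ) with γ ≠ I such that ‖a_t g γ g^{-1} a_{−t} − I‖ < C·e^{−τt} (Frobenius norm). -/
noncomputable section

/-- The Frobenius norm of a real matrix. -/
def frobNorm {n : ℕ} (X : Matrix (Fin n) (Fin n) ℝ) : ℝ :=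
  Real.sqrt (∑ i, ∑ j, (X i j) ^ 2)

/-- The first minimum of a set of matrices: the infimum of the Frobenius norms of its
nonzero elements. -/
def firstMinM {n : ℕ} (Λ : Set (Matrix (Fin n) (Fin n) ℝ)) : ℝ :=
  sInf {r | ∃ X ∈ Λ, X ≠ 0 ∧ frobNorm X = r}

/-- The diagonal matrix `a_t = diag(e^{b₁ t}, …, e^{bₙ t})`. -/
def aMat {n : ℕ} (b : Fin n → ℝ) (t : ℝ) : Matrix (Fin n) (Fin n) ℝ :=
  Matrix.diagonal fun i => Real.exp (b i * t)

/-- The lattice `sl_n(ℤ)` of trace-zero integer matrices, inside `sl_n(ℝ)`. -/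
def slZ (n : ℕ) : Set (Matrix (Fin n) (Fin n) ℝ) :=
  {X | (∃ m : Matrix (Fin n) (Fin n) ℤ, X = m.map (fun a => (a : ℝ))) ∧ Matrix.trace X = 0}

/-!
Translation by the identity, `m ↦ 1 + m`, matches the nonzero elements of `sl_n(ℤ)` with the
nontrivial elements of `SL_n(ℤ)` once their conjugates by an arbitrary invertible `P` are small.
Indeed `tr m` and `det (1 + m)` are integers which can be computed from `P m P⁻¹`, and by continuity
they are close to `0` and `1`, hence equal to `0` and `1`, when `P m P⁻¹` is close to `0`. How close
does not depend on `P`, so shrinking `C` brings the bound `C e^{-τt}` into the range where both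
conditions say the same.
-/

open Filter Topology

section IntegerMatrices

theorem eventually_nhds_intCast_forall_eq (k : ℤ) :
    ∀ᶠ x in 𝓝 (k : ℝ), ∀ l : ℤ, (l : ℝ) = x → l = k := by
  filter_upwards [Metric.ball_mem_nhds _ one_pos]
  rintro _ hl l rfl
  rw [Metric.mem_ball, Int.dist_cast_real, Int.dist_eq] at hl
  exact sub_eq_zero.1 (Int.abs_lt_one_iff.1 (by exact_mod_cast hl))

variable {ι R : Type*}

theorem map_intCast_one_add [DecidableEq ι] [AddGroupWithOne R] (m : Matrix ι ι ℤ) :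
    (1 + m).map (fun a => (a : R)) = 1 + m.map (fun a => (a : R)) := by
  rw [Matrix.map_add _ Int.cast_add, Matrix.map_one _ Int.cast_zero Int.cast_one]

variable [Fintype ι]

theorem trace_map_intCast [AddCommGroupWithOne R] (m : Matrix ι ι ℤ) :
    (m.map (fun a => (a : R))).trace = m.trace :=
  (AddMonoidHom.map_trace (Int.castAddHom R) m).symm

theorem exists_trace_eq_zero_and_ne_zero [NonAssocSemiring R] [Nontrivial R] [Nontrivial ι] :
    ∃ m : Matrix ι ι R, m.trace = 0 ∧ m ≠ 0 := by
  classical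
  obtain ⟨i, j, hij⟩ := exists_pair_ne ι
  refine ⟨Matrix.single i j 1, Matrix.trace_single_eq_of_ne i j 1 hij, fun h => ?_⟩
  simpa using congr_fun₂ h i j

variable [DecidableEq ι]

theorem conj_eq_zero_iff_of_isUnit [CommRing R] {P X : Matrix ι ι R} (hP : IsUnit P) :
    P * X * P⁻¹ = 0 ↔ X = 0 := by
  rw [(Matrix.isUnit_nonsing_inv_iff.2 hP).mul_left_eq_zero, hP.mul_right_eq_zero]

theorem conj_one_add_of_isUnit [CommRing R] {P : Matrix ι ι R} (hP : IsUnit P) (X : Matrix ι ι R) :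
    P * (1 + X) * P⁻¹ = 1 + P * X * P⁻¹ := by
  rw [mul_add, add_mul, mul_one, Matrix.mul_nonsing_inv P ((Matrix.isUnit_iff_isUnit_det P).1 hP)]

theorem eventually_conj_intMatrix_imp_trace_eq_zero_and_det_one_add_eq_one :
    ∀ᶠ Y in 𝓝 (0 : Matrix ι ι ℝ), ∀ (P : Matrix ι ι ℝ) (m : Matrix ι ι ℤ), IsUnit P →
      P * m.map (fun a => (a : ℝ)) * P⁻¹ = Y → m.trace = 0 ∧ (1 + m).det = 1 := by
  have trace_tendsto : Tendsto Matrix.trace (𝓝 (0 : Matrix ι ι ℝ)) (𝓝 ((0 : ℤ) : ℝ)) :=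
    Continuous.tendsto' (by fun_prop) _ _ (by simp)
  have det_tendsto :
      Tendsto (fun Y => (1 + Y).det) (𝓝 (0 : Matrix ι ι ℝ)) (𝓝 ((1 : ℤ) : ℝ)) :=
    Continuous.tendsto' (by fun_prop) _ _ (by simp)
  filter_upwards [trace_tendsto.eventually (eventually_nhds_intCast_forall_eq 0),
    det_tendsto.eventually (eventually_nhds_intCast_forall_eq 1)]
  rintro _ htrace hdet P m hP rfl
  refine ⟨htrace _ ?_, hdet _ ?_⟩
  · rw [Matrix.trace_conj hP, trace_map_intCast]
  · rw [← conj_one_add_of_isUnit hP, Matrix.det_conj hP, ← map_intCast_one_add, Int.cast_det]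

end IntegerMatrices

section FirstMinimum

variable {n : ℕ}

open scoped Matrix.Norms.Frobenius in
theorem frobNorm_eq_norm (X : Matrix (Fin n) (Fin n) ℝ) : frobNorm X = ‖X‖ := by
  simp [frobNorm, Matrix.frobenius_norm_def, Real.sqrt_eq_rpow]

open scoped Matrix.Norms.Frobenius in
theorem nhds_zero_hasBasis_frobNorm_lt :
    (𝓝 (0 : Matrix (Fin n) (Fin n) ℝ)).HasBasis (0 < ·) fun ε => {X | frobNorm X < ε} := by
  simp only [frobNorm_eq_norm]
  exact NormedAddGroup.nhds_zero_basis_norm_lt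

theorem firstMinM_lt_iff {Λ : Set (Matrix (Fin n) (Fin n) ℝ)} (hΛ : ∃ X ∈ Λ, X ≠ 0) {r : ℝ} :
    firstMinM Λ < r ↔ ∃ X ∈ Λ, X ≠ 0 ∧ frobNorm X < r := by
  have bddBelow : BddBelow {r | ∃ X ∈ Λ, X ≠ 0 ∧ frobNorm X = r} :=
    ⟨0, by rintro _ ⟨X, -, -, rfl⟩; exact Real.sqrt_nonneg _⟩
  obtain ⟨X, hX, hX0⟩ := hΛ
  rw [firstMinM, csInf_lt_iff bddBelow ⟨_, X, hX, hX0, rfl⟩]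
  simp only [Set.mem_ofPred_eq]
  grind

theorem slZ_eq_image :
    slZ n =
      (fun m : Matrix (Fin n) (Fin n) ℤ => m.map (fun a => (a : ℝ))) '' {m | m.trace = 0} := by
  ext X
  constructor
  · rintro ⟨⟨m, rfl⟩, htrace⟩
    rw [trace_map_intCast, Int.cast_eq_zero] at htrace
    exact ⟨m, htrace, rfl⟩
  · rintro ⟨m, htrace, rfl⟩
    exact ⟨⟨m, rfl⟩, by rw [trace_map_intCast, htrace, Int.cast_zero]⟩

theorem firstMinM_conj_slZ_lt_iff [Nontrivial (Fin n)] {P : Matrix (Fin n) (Fin n) ℝ}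
    (hP : IsUnit P) {r : ℝ} :
    firstMinM ((fun X => P * X * P⁻¹) '' slZ n) < r ↔
      ∃ m : Matrix (Fin n) (Fin n) ℤ, m.trace = 0 ∧ m ≠ 0 ∧
        frobNorm (P * m.map (fun a => (a : ℝ)) * P⁻¹) < r := by
  have conj_ne_zero_iff (m : Matrix (Fin n) (Fin n) ℤ) :
      P * m.map (fun a => (a : ℝ)) * P⁻¹ ≠ 0 ↔ m ≠ 0 := by
    rw [Ne, conj_eq_zero_iff_of_isUnit hP, ← Matrix.map_zero _ Int.cast_zero,
      (Matrix.map_injective Int.cast_injective).eq_iff]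
  rw [slZ_eq_image, Set.image_image, firstMinM_lt_iff]
  · simp only [Set.exists_mem_image, Set.mem_ofPred_eq, conj_ne_zero_iff]
  · obtain ⟨m, htrace, hm⟩ := exists_trace_eq_zero_and_ne_zero (ι := Fin n) (R := ℤ)
    exact ⟨_, Set.mem_image_of_mem _ htrace, (conj_ne_zero_iff m).2 hm⟩

theorem exists_pos_firstMinM_conj_slZ_lt_iff_exists_det_eq_one (n : ℕ) [Nontrivial (Fin n)] :
    ∃ ε > 0, ∀ P : Matrix (Fin n) (Fin n) ℝ, IsUnit P → ∀ r ≤ ε,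
      (firstMinM ((fun X => P * X * P⁻¹) '' slZ n) < r ↔
        ∃ γ : Matrix (Fin n) (Fin n) ℤ, γ.det = 1 ∧ γ ≠ 1 ∧
          frobNorm (P * γ.map (fun a => (a : ℝ)) * P⁻¹ - 1) < r) := by
  obtain ⟨ε, hε, trace_det_of_lt⟩ := nhds_zero_hasBasis_frobNorm_lt.eventually_iff.1
    (eventually_conj_intMatrix_imp_trace_eq_zero_and_det_one_add_eq_one (ι := Fin n))
  refine ⟨ε, hε, fun P hP r hr => (firstMinM_conj_slZ_lt_iff hP).trans ?_⟩
  refine (Equiv.addLeft 1).exists_congr fun m => ?_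
  rw [Equiv.coe_addLeft, map_intCast_one_add, conj_one_add_of_isUnit hP, add_sub_cancel_left,
    Ne, Ne, add_eq_left]
  have trace_det (hlt : frobNorm (P * m.map (fun a => (a : ℝ)) * P⁻¹) < r) :=
    trace_det_of_lt (hlt.trans_le hr) P m hP rfl
  tauto

end FirstMinimum

section DiagonalFlow

variable {n : ℕ} (b : Fin n → ℝ) (t : ℝ)

theorem aMat_mul_aMat_neg : aMat b t * aMat b (-t) = 1 := by
  simp [aMat, Matrix.diagonal_mul_diagonal, ← Real.exp_add]

theorem isUnit_aMat : IsUnit (aMat b t) :=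
  IsUnit.of_mul_eq_one _ (aMat_mul_aMat_neg b t)

theorem inv_mul_aMat_neg (g : Matrix (Fin n) (Fin n) ℝ) :
    g⁻¹ * aMat b (-t) = (aMat b t * g)⁻¹ := by
  rw [Matrix.mul_inv_rev, Matrix.inv_eq_right_inv (aMat_mul_aMat_neg b t)]

end DiagonalFlow

section Rates

variable {T : Type*} {s : Set T} {ψ : T → ℝ}

theorem exists_pos_forall_mul_le_min (hψ₀ : ∀ t ∈ s, 0 ≤ ψ t) (hψ : BddAbove (ψ '' s))
    {C ε : ℝ} (hC : 0 < C) (hε : 0 < ε) : ∃ c > 0, ∀ t ∈ s, c * ψ t ≤ min (C * ψ t) ε := by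
  obtain ⟨B, hB, hψB⟩ := hψ.exists_ge 1
  have hB₀ : 0 < B := one_pos.trans_le hB
  refine ⟨min C (ε / B), by positivity, fun t ht => le_min ?_ ?_⟩
  · exact mul_le_mul_of_nonneg_right (min_le_left _ _) (hψ₀ t ht)
  · calc min C (ε / B) * ψ t ≤ ε / B * B :=
          mul_le_mul (min_le_right _ _) (hψB _ (Set.mem_image_of_mem ψ ht)) (hψ₀ t ht)
            (by positivity)
      _ = ε := div_mul_cancel₀ ε hB₀.ne'

theorem forall_pos_exists_mul_of_imp_of_le (hψ₀ : ∀ t ∈ s, 0 ≤ ψ t) (hψ : BddAbove (ψ '' s))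
    {p q : T → ℝ → Prop} (hq : ∀ t, Monotone (q t)) {ε : ℝ} (hε : 0 < ε)
    (hpq : ∀ t ∈ s, ∀ r ≤ ε, p t r → q t r) (hp : ∀ C > 0, ∃ t ∈ s, p t (C * ψ t)) :
    ∀ C > 0, ∃ t ∈ s, q t (C * ψ t) := by
  intro C hC
  obtain ⟨c, hc, hle⟩ := exists_pos_forall_mul_le_min hψ₀ hψ hC hε
  obtain ⟨t, ht, hpt⟩ := hp c hc
  exact ⟨t, ht, hq t ((hle t ht).trans (min_le_left _ _))
    (hpq t ht _ ((hle t ht).trans (min_le_right _ _)) hpt)⟩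

theorem bddAbove_exp_neg_mul_image_Ioi {τ : ℝ} (hτ : 0 ≤ τ) :
    BddAbove ((fun t => Real.exp (-τ * t)) '' Set.Ioi 0) := by
  refine ⟨1, ?_⟩
  rintro _ ⟨t, ht, rfl⟩
  exact Real.exp_le_one_iff.2 (mul_nonpos_of_nonpos_of_nonneg (neg_nonpos.2 hτ) (le_of_lt ht))

end Rates

theorem not_adjoint_diophantine_iff_not_diophantine_type_general {n : ℕ} [Nontrivial (Fin n)]
    {T : Type*} {s : Set T} {P : T → Matrix (Fin n) (Fin n) ℝ} (hP : ∀ t ∈ s, IsUnit (P t))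
    {ψ : T → ℝ} (hψ₀ : ∀ t ∈ s, 0 ≤ ψ t) (hψ : BddAbove (ψ '' s)) :
    (∀ C > 0, ∃ t ∈ s, firstMinM ((fun X => P t * X * (P t)⁻¹) '' slZ n) < C * ψ t) ↔
      (∀ C > 0, ∃ t ∈ s, ∃ γ : Matrix (Fin n) (Fin n) ℤ, γ.det = 1 ∧ γ ≠ 1 ∧
        frobNorm (P t * γ.map (fun a => (a : ℝ)) * (P t)⁻¹ - 1) < C * ψ t) := by
  obtain ⟨ε, hε, hiff⟩ := exists_pos_firstMinM_conj_slZ_lt_iff_exists_det_eq_one n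
  constructor
  · exact forall_pos_exists_mul_of_imp_of_le hψ₀ hψ
      (q := fun t r => ∃ γ : Matrix (Fin n) (Fin n) ℤ, γ.det = 1 ∧ γ ≠ 1 ∧
        frobNorm (P t * γ.map (fun a => (a : ℝ)) * (P t)⁻¹ - 1) < r)
      (fun _ _ _ hle ⟨γ, hdet, hne, hlt⟩ => ⟨γ, hdet, hne, hlt.trans_le hle⟩) hε
      (fun t ht r hr => (hiff (P t) (hP t ht) r hr).1)
  · exact forall_pos_exists_mul_of_imp_of_le hψ₀ hψ
      (q := fun t r => firstMinM ((fun X => P t * X * (P t)⁻¹) '' slZ n) < r)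
      (fun _ _ _ hle hlt => hlt.trans_le hle) hε
      (fun t ht r hr => (hiff (P t) (hP t ht) r hr).2)

theorem not_adjoint_diophantine_iff_not_diophantine_type
    (b : Fin 3 → ℝ) (h01 : b 1 < b 0) (h12 : b 2 < b 1)
    (hsum : ∑ i, b i = 0)
    (τ : ℝ) (hτ : 0 < τ)
    (g : Matrix (Fin 3) (Fin 3) ℝ) (hg : g.det = 1) :
    (∀ C > 0, ∃ t > 0,
        firstMinM ((fun X => (aMat b t * g) * X * (aMat b t * g)⁻¹) '' slZ 3) <
          C * Real.exp (-τ * t)) ↔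
      (∀ C > 0, ∃ t > 0, ∃ γ : Matrix (Fin 3) (Fin 3) ℤ, γ.det = 1 ∧ γ ≠ 1 ∧
        frobNorm (aMat b t * g * (γ.map (fun a => (a : ℝ))) * g⁻¹ * aMat b (-t) - 1) <
          C * Real.exp (-τ * t)) := by
  simp only [mul_assoc _ g⁻¹, inv_mul_aMat_neg]
  exact not_adjoint_diophantine_iff_not_diophantine_type_general
    (fun t _ => (isUnit_aMat b t).mul ((Matrix.isUnit_iff_isUnit_det g).2 (by simp [hg])))
    (fun t _ => (Real.exp_pos _).le) (bddAbove_exp_neg_mul_image_Ioi hτ.le)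

end
end

section
/- Let w ∈ SL_n(ℚ) be a monomial matrix (exactly one nonzero entry in each row and each column, all entries rational). Then there exists a constant θ_w > 0, depending only on w, such that for every upper-triangular unipotent matrix u ∈ SL_n(ℝ), every nonzero vector of the set (wu)ℤ^n ∩ ℝ·e_n has Euclidean norm at least θ_w. In particular, if (wu)ℤ^n ∩ ℝ·e_n ≠ {0}, then this rank-one lattice in the line ℝ·e_n has covolume at least θ_w. -/
/-!
If `w * u` sends an integer vector `m` to `c • e_k`, then `u` sends `m` to a multiple of `e_(σ k)`,
where `σ` is the permutation underlying `w`. As `u` is upper-triangular unipotent, back substitution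
shows that `m` vanishes beyond `σ k` and that `c = w k (σ k) * m (σ k)`. When `c ≠ 0`, the integer
`m (σ k)` is nonzero, so `|c| ≥ |w k (σ k)|`, which does not depend on `u`.
-/

noncomputable section

/-- The Euclidean norm on `ι → ℝ`. -/
def eucNorm {ι : Type*} [Fintype ι] (v : ι → ℝ) : ℝ := Real.sqrt (∑ i, (v i) ^ 2)

section UpperTriangular

open scoped Matrix

theorem mulVec_apply_eq_mul_of_forall_ne {m n R : Type*} [Fintype n]
    [NonUnitalNonAssocSemiring R] {A : Matrix m n R} {v : n → R} {i : m} {k : n}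
    (h : ∀ j, j ≠ k → A i j * v j = 0) : (A *ᵥ v) i = A i k * v k :=
  Fintype.sum_eq_single k h

variable {ι R : Type*} [Fintype ι] [LinearOrder ι]

theorem mulVec_apply_eq_diag_mul_of_blockTriangular [NonUnitalNonAssocSemiring R]
    {u : Matrix ι ι R} (hu : u.BlockTriangular id) {v : ι → R} {k : ι}
    (hv : ∀ j, k < j → v j = 0) : (u *ᵥ v) k = u k k * v k := by
  refine mulVec_apply_eq_mul_of_forall_ne fun j hjk => ?_
  rcases lt_or_gt_of_ne hjk with hlt | hgt
  · rw [hu hlt, zero_mul]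
  · rw [hv j hgt, mul_zero]

theorem apply_eq_zero_of_blockTriangular_mulVec_apply_eq_zero [NonUnitalNonAssocSemiring R]
    {u : Matrix ι ι R} (hu : u.BlockTriangular id) (hdiag : ∀ i, IsLeftRegular (u i i))
    {v : ι → R} {k : ι} (huv : ∀ j, k < j → (u *ᵥ v) j = 0) {j : ι} (hj : k < j) : v j = 0 := by
  induction j using WellFoundedGT.induction with
  | ind j ih =>
    have huvj : u j j * v j = 0 := by
      rw [← mulVec_apply_eq_diag_mul_of_blockTriangular hu fun i hi => ih i hi (hj.trans hi)]
      exact huv j hj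
    exact (hdiag j).mul_left_eq_zero_iff.1 huvj

theorem eq_mul_of_monomial_mul_blockTriangular_mulVec_eq_single [NonUnitalSemiring R]
    {w u : Matrix ι ι R} {σ : Equiv.Perm ι} (hw : ∀ i j, j ≠ σ i → w i j = 0)
    (hwσ : ∀ i, IsLeftRegular (w i (σ i))) (hu : u.BlockTriangular id)
    (hdiag : ∀ i, IsLeftRegular (u i i)) {v : ι → R} {k : ι} {c : R}
    (hv : (w * u) *ᵥ v = Pi.single k c) : c = w k (σ k) * (u (σ k) (σ k) * v (σ k)) := by
  have entry (i : ι) : w i (σ i) * (u *ᵥ v) (σ i) = (Pi.single k c : ι → R) i := by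
    rw [← hv, ← Matrix.mulVec_mulVec]
    exact (mulVec_apply_eq_mul_of_forall_ne fun j hj => by rw [hw i j hj, zero_mul]).symm
  have huv : ∀ j, σ k < j → (u *ᵥ v) j = 0 := by
    intro j hj
    obtain ⟨i, rfl⟩ := σ.surjective j
    have hik : i ≠ k := fun h => hj.ne' (congrArg σ h)
    exact (hwσ i).mul_left_eq_zero_iff.1 ((entry i).trans (Pi.single_eq_of_ne hik _))
  have hvσ : ∀ j, σ k < j → v j = 0 := fun _ hj =>
    apply_eq_zero_of_blockTriangular_mulVec_apply_eq_zero hu hdiag huv hj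
  rw [← mulVec_apply_eq_diag_mul_of_blockTriangular hu hvσ, entry k, Pi.single_eq_same]

end UpperTriangular

theorem eucNorm_single {ι : Type*} [Fintype ι] [DecidableEq ι] (k : ι) (c : ℝ) :
    eucNorm (Pi.single k c) = |c| := by
  simp [eucNorm, Pi.single_apply, Real.sqrt_sq_eq_abs]

theorem abs_le_abs_mul_intCast {R : Type*} [Ring R] [LinearOrder R] [IsStrictOrderedRing R]
    (a : R) {m : ℤ} (hm : m ≠ 0) : |a| ≤ |a * m| := by
  rw [abs_mul]
  exact le_mul_of_one_le_right (abs_nonneg a) (mod_cast Int.one_le_abs hm)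

theorem height_lower_bound_for_monomial_weyl_element_general
    {ι : Type*} [Fintype ι] [LinearOrder ι] {w u : Matrix ι ι ℝ} {σ : Equiv.Perm ι}
    (hw : ∀ i j, w i j ≠ 0 ↔ j = σ i) (hu : u.BlockTriangular id) (hdiag : ∀ i, u i i ≠ 0)
    {m : ι → ℤ} {k : ι} {c : ℝ} (hm : (w * u).mulVec (fun i => (m i : ℝ)) = Pi.single k c)
    (hne : (w * u).mulVec (fun i => (m i : ℝ)) ≠ 0) :
    |w k (σ k) * u (σ k) (σ k)| ≤ eucNorm ((w * u).mulVec fun i => (m i : ℝ)) := by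
  have hc : c = w k (σ k) * u (σ k) (σ k) * m (σ k) := by
    rw [mul_assoc]
    exact eq_mul_of_monomial_mul_blockTriangular_mulVec_eq_single
      (fun i j hj => not_not.1 fun h => hj ((hw i j).1 h))
      (fun i => (IsRegular.of_ne_zero ((hw i (σ i)).2 rfl)).left) hu
      (fun i => (IsRegular.of_ne_zero (hdiag i)).left) hm
  have hmσ : m (σ k) ≠ 0 := by
    intro h
    rw [hm, hc, h, Int.cast_zero, mul_zero, Pi.single_zero] at hne
    exact hne rfl
  rw [hm, eucNorm_single, hc]
  exact abs_le_abs_mul_intCast _ hmσ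

theorem height_lower_bound_for_monomial_weyl_element
    (n : ℕ) (hn : 2 ≤ n)
    (w : Matrix (Fin n) (Fin n) ℚ) (hwdet : w.det = 1)
    (hwmono : ∃ σ : Equiv.Perm (Fin n), ∀ i j : Fin n, w i j ≠ 0 ↔ j = σ i) :
    ∃ θ : ℝ, 0 < θ ∧
      ∀ u : Matrix (Fin n) (Fin n) ℝ,
        (∀ i, u i i = 1) → (∀ i j : Fin n, j < i → u i j = 0) →
        ∀ m : Fin n → ℤ,
          (∃ c : ℝ, ((w.map fun a => (a : ℝ)) * u).mulVec (fun i => (m i : ℝ)) =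
            fun i => if i = (⟨n - 1, by omega⟩ : Fin n) then c else 0) →
          ((w.map fun a => (a : ℝ)) * u).mulVec (fun i => (m i : ℝ)) ≠ 0 →
          θ ≤ eucNorm (((w.map fun a => (a : ℝ)) * u).mulVec (fun i => (m i : ℝ))) := by
  obtain ⟨σ, hσ⟩ := hwmono
  refine ⟨|(w ⟨n - 1, by omega⟩ (σ ⟨n - 1, by omega⟩) : ℝ)|,
    abs_pos.2 (Rat.cast_ne_zero.2 ((hσ _ _).2 rfl)), fun u hdiag hupper m ⟨c, hc⟩ hne => ?_⟩
  simpa [hdiag] using height_lower_bound_for_monomial_weyl_element_general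
    (fun i j => by simpa using hσ i j) hupper (by simp [hdiag])
    (hc.trans (funext fun i => (Pi.single_apply _ c i).symm)) hne

end
end
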